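/- arXiv:1806.09726 — 2 statements merged into one kernel-verified Lean document; each statement's English description precedes it below -/
import Mathlib

section
/- For every integer m ≥ 2, every p ∈ (0,1) and every ε > 0, there exists C > 0 such that if N ≥ C · p^(−(2m−1)) · (log(1/p))², then (1−ε) · p^(C(m,2)) · (2N)^(m/2) ≤ t(K_m, p, N) ≤ (1+ε) · p^(C(m,2)) · (2N)^(m/2), where C(m,2) = m(m−1)/2 and log denotes the natural logarithm. -/
open scoped Classical

namespace OnlineRamseyGame

/-- A valid Builder strategy: it never builds a loop, and along any play the
edges built are pairwise distinct. -/
def ValidBuilder {V : Type*} (B : List Bool → Sym2 V) : Prop :=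
  (∀ h : List Bool, ¬ (B h).IsDiag) ∧
  ∀ h : List Bool, ∀ i : ℕ, i < h.length → B (h.take i) ≠ B h

/-- The history (as a list) of the first `t` values of the color sequence `x`. -/
def histSeq (x : ℕ → Bool) (t : ℕ) : List Bool := (List.range t).map x

/-- Extend a finite color sequence to an infinite one (by `false`). -/
def extSeq {N : ℕ} (x : Fin N → Bool) : ℕ → Bool :=
  fun t => if h : t < N then x ⟨t, h⟩ else false

/-- The probability of the outcome `x` when each turn is independently `true`
with probability `p` and `false` with probability `1 - p`. -/
noncomputable def weight (p : ℝ) {N : ℕ} (x : Fin N → Bool) : ℝ :=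
  ∏ i, if x i then p else 1 - p

/-- The number of labeled copies of `K_m` in the graph of successful queries
within the first `N` queries. -/
noncomputable def copyCount (m : ℕ) (edge : ℕ → Sym2 ℕ) (x : ℕ → Bool) (N : ℕ) : ℕ :=
  Set.ncard {f : Fin m → ℕ | Function.Injective f ∧
    ∀ i j : Fin m, i ≠ j → ∃ t, t < N ∧ edge t = s(f i, f j) ∧ x t = true}

/-- The expected number of labeled copies of `K_m` built by strategy `Q` within
`N` queries in the Subgraph Query Game with parameter `p`. -/
noncomputable def expectedCopies (m : ℕ) (Q : List Bool → Sym2 ℕ) (N : ℕ) (p : ℝ) : ℝ :=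
  ∑ x : Fin N → Bool, weight p x *
    (copyCount m (fun t => Q (histSeq (extSeq x) t)) (extSeq x) N : ℝ)

/-- `t(K_m, p, N)`: the maximal, over all valid Builder strategies, expected
number of labeled copies of `K_m` built in `N` queries. -/
noncomputable def tQuery (m : ℕ) (p : ℝ) (N : ℕ) : ℝ :=
  sSup {E : ℝ | ∃ Q : List Bool → Sym2 ℕ, ValidBuilder Q ∧ E = expectedCopies m Q N p}

/-!
For the lower bound, Builder queries all pairs among about `√(2N)` vertices. For the upper bound,
put `L = δN` with a small constant `δ` and ignore the turns that query a vertex more than `L`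
times: only `2N / L` vertices can get that many queries, and few copies meet them. On the remaining
turns, `built - p • queried` is a martingale transform of the coin flips. Nondegenerate 4-cycles
therefore have zero expected weight in it, and only the `O(NL)` degenerate ones remain. Hence its
operator norm is small compared with `√N`, and replacing the built graph by `p • queried` at each
of the `m.choose 2` edges of `K_m` in turn changes the count by at most a small fraction. The
queried graph has at most `2N` ordered edges, so at most `(2N) ^ (m / 2)` labeled `m`-cliques by
Kruskal–Katona.
-/

section CliqueSum

variable {V : Type*}

/-- The weight `∏ W (f i) (f j)` over pairs `i < j` of a tuple `f` in the weighted graph `W`. For a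
`0`/`1`-valued kernel it indicates that `f` spans a clique. -/
noncomputable def cliqueProd (W : V → V → ℝ) {n : ℕ} (f : Fin n → V) : ℝ :=
  ∏ i, ∏ j ∈ Finset.Ioi i, W (f i) (f j)

lemma cliqueProd_cons (W : V → V → ℝ) {n : ℕ} (v : V) (f : Fin n → V) :
    cliqueProd W (Fin.cons v f : Fin (n + 1) → V) = (∏ i, W v (f i)) * cliqueProd W f := by
  simp [cliqueProd, Fin.prod_univ_succ]

lemma cliqueProd_nonneg {W : V → V → ℝ} (hW : ∀ x y, 0 ≤ W x y) {n : ℕ} (f : Fin n → V) :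
    0 ≤ cliqueProd W f :=
  Finset.prod_nonneg fun _ _ ↦ Finset.prod_nonneg fun _ _ ↦ hW _ _

lemma cliqueProd_le_cliqueProd {W W' : V → V → ℝ} (hW : ∀ x y, 0 ≤ W x y) {n : ℕ} {f : Fin n → V}
    (h : ∀ i j, W (f i) (f j) ≤ W' (f i) (f j)) : cliqueProd W f ≤ cliqueProd W' f :=
  Finset.prod_le_prod (fun _ _ ↦ Finset.prod_nonneg fun _ _ ↦ hW _ _) fun _ _ ↦
    Finset.prod_le_prod (fun _ _ ↦ hW _ _) fun _ _ ↦ h _ _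

variable [Fintype V]

/-- The number of ordered `n`-cliques of the weighted graph with edge weights `W` and vertex
weights `a`. Vertex weights make the count recursive: see `cliqueSum_succ`. -/
noncomputable def cliqueSum (W : V → V → ℝ) (a : V → ℝ) (n : ℕ) : ℝ :=
  ∑ f : Fin n → V, (∏ i, a (f i)) * cliqueProd W f

lemma cliqueSum_zero (W : V → V → ℝ) (a : V → ℝ) : cliqueSum W a 0 = 1 := by
  simp [cliqueSum, cliqueProd]

lemma cliqueSum_succ (W : V → V → ℝ) (a : V → ℝ) (n : ℕ) :
    cliqueSum W a (n + 1) = ∑ v, a v * cliqueSum W (fun x ↦ a x * W v x) n := by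
  unfold cliqueSum
  rw [← (Fin.consEquiv fun _ ↦ V).sum_comp, Fintype.sum_prod_type]
  refine Finset.sum_congr rfl fun v _ ↦ ?_
  rw [Finset.mul_sum]
  refine Finset.sum_congr rfl fun f _ ↦ ?_
  have cons_apply : Fin.consEquiv (fun _ : Fin (n + 1) ↦ V) (v, f) = Fin.cons v f := rfl
  rw [cons_apply, cliqueProd_cons]
  simp only [Fin.prod_univ_succ, Fin.cons_zero, Fin.cons_succ, Finset.prod_mul_distrib]
  ring

lemma cliqueSum_one (W : V → V → ℝ) (a : V → ℝ) : cliqueSum W a 1 = ∑ v, a v := by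
  simp [cliqueSum_succ, cliqueSum_zero]

lemma cliqueSum_two (W : V → V → ℝ) (a : V → ℝ) :
    cliqueSum W a 2 = ∑ x, ∑ y, a x * a y * W x y := by
  simp only [cliqueSum_succ, cliqueSum_zero, mul_one, Finset.mul_sum, mul_assoc]

lemma cliqueSum_mul (W : V → V → ℝ) (a b : V → ℝ) (n : ℕ) :
    cliqueSum W (fun x ↦ a x * b x) n =
      ∑ f : Fin n → V, ((∏ i, a (f i)) * cliqueProd W f) * ∏ i, b (f i) :=
  Finset.sum_congr rfl fun f _ ↦ by rw [Finset.prod_mul_distrib]; ring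

lemma cliqueSum_nonneg {W : V → V → ℝ} {a : V → ℝ} (hW : ∀ x y, 0 ≤ W x y) (ha : ∀ x, 0 ≤ a x)
    (n : ℕ) : 0 ≤ cliqueSum W a n :=
  Finset.sum_nonneg fun f _ ↦
    mul_nonneg (Finset.prod_nonneg fun _ _ ↦ ha _) (cliqueProd_nonneg hW f)

lemma cliqueSum_mono_vertex {W : V → V → ℝ} {a a' : V → ℝ} (hW : ∀ x y, 0 ≤ W x y)
    (ha : ∀ x, 0 ≤ a x) (haa' : ∀ x, a x ≤ a' x) (n : ℕ) : cliqueSum W a n ≤ cliqueSum W a' n :=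
  Finset.sum_le_sum fun f _ ↦ mul_le_mul_of_nonneg_right
    (Finset.prod_le_prod (fun _ _ ↦ ha _) fun _ _ ↦ haa' _) (cliqueProd_nonneg hW f)

lemma cliqueSum_mono_edge {W W' : V → V → ℝ} {a : V → ℝ} (hW : ∀ x y, 0 ≤ W x y)
    (hWW' : ∀ x y, W x y ≤ W' x y) (ha : ∀ x, 0 ≤ a x) (n : ℕ) :
    cliqueSum W a n ≤ cliqueSum W' a n :=
  Finset.sum_le_sum fun _ _ ↦ mul_le_mul_of_nonneg_left
    (cliqueProd_le_cliqueProd hW fun _ _ ↦ hWW' _ _) (Finset.prod_nonneg fun _ _ ↦ ha _)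

lemma cliqueSum_indicator_le {W W' : V → V → ℝ} (hW : ∀ x y, 0 ≤ W x y) (hW' : ∀ x y, 0 ≤ W' x y)
    {S : Set V} (h : ∀ x ∈ S, ∀ y ∈ S, W x y ≤ W' x y) (n : ℕ) :
    cliqueSum W (S.indicator 1) n ≤ cliqueSum W' 1 n := by
  refine Finset.sum_le_sum fun f _ ↦ ?_
  by_cases hf : ∀ i, f i ∈ S
  · simp only [Set.indicator_of_mem (hf _)]
    exact mul_le_mul_of_nonneg_left
      (cliqueProd_le_cliqueProd hW fun i j ↦ h _ (hf i) _ (hf j)) (by simp)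
  · obtain ⟨i, hi⟩ := not_forall.1 hf
    rw [Finset.prod_eq_zero (Finset.mem_univ i) (Set.indicator_of_notMem hi _), zero_mul]
    exact mul_nonneg (by simp) (cliqueProd_nonneg hW' f)

/-- The Kruskal–Katona bound. -/
lemma cliqueSum_le_sqrt_pow {W : V → V → ℝ} (h0 : ∀ x y, 0 ≤ W x y) (h1 : ∀ x y, W x y ≤ 1)
    {n : ℕ} (hn : 2 ≤ n) {a : V → ℝ} (ha : ∀ x, 0 ≤ a x) :
    cliqueSum W a n ≤ √(∑ x, ∑ y, a x * a y * W x y) ^ n := by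
  have edges_nonneg {b : V → ℝ} (hb : ∀ x, 0 ≤ b x) : 0 ≤ ∑ x, ∑ y, b x * b y * W x y :=
    Finset.sum_nonneg fun _ _ ↦ Finset.sum_nonneg fun _ _ ↦
      mul_nonneg (mul_nonneg (hb _) (hb _)) (h0 _ _)
  induction n, hn using Nat.le_induction generalizing a with
  | base => rw [Real.sq_sqrt (edges_nonneg ha), cliqueSum_two]
  | succ n hn ih =>
    set E := ∑ x, ∑ y, a x * a y * W x y with hE
    have link_bound (v : V) :
        cliqueSum W (fun x ↦ a x * W v x) n ≤ (∑ x, a x * W v x) * √E ^ (n - 1) := by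
      have hb (x : V) : 0 ≤ a x * W v x := mul_nonneg (ha x) (h0 v x)
      have hba (x : V) : a x * W v x ≤ a x := mul_le_of_le_one_right (ha x) (h1 v x)
      set F := ∑ x, ∑ y, (a x * W v x) * (a y * W v y) * W x y
      have hF_deg : √F ≤ ∑ x, a x * W v x := by
        refine Real.sqrt_le_iff.2 ⟨Finset.sum_nonneg fun x _ ↦ hb x, ?_⟩
        rw [sq, Finset.sum_mul_sum]
        refine Finset.sum_le_sum fun x _ ↦ Finset.sum_le_sum fun y _ ↦ ?_
        exact mul_le_of_le_one_right (mul_nonneg (hb x) (hb y)) (h1 x y)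
      have hF_E : F ≤ E := by
        refine Finset.sum_le_sum fun x _ ↦ Finset.sum_le_sum fun y _ ↦ ?_
        exact mul_le_mul_of_nonneg_right (mul_le_mul (hba x) (hba y) (hb y) (ha x)) (h0 x y)
      calc cliqueSum W (fun x ↦ a x * W v x) n ≤ √F ^ n := ih hb
        _ = √F * √F ^ (n - 1) := (mul_pow_sub_one (by omega) _).symm
        _ ≤ _ := by gcongr; exact Finset.sum_nonneg fun x _ ↦ hb x
    calc cliqueSum W a (n + 1) = ∑ v, a v * cliqueSum W (fun x ↦ a x * W v x) n :=
          cliqueSum_succ W a n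
      _ ≤ ∑ v, a v * ((∑ x, a x * W v x) * √E ^ (n - 1)) :=
          Finset.sum_le_sum fun v _ ↦ mul_le_mul_of_nonneg_left (link_bound v) (ha v)
      _ = √E ^ 2 * √E ^ (n - 1) := by
          rw [Real.sq_sqrt (edges_nonneg ha)]
          simp only [← mul_assoc, ← Finset.sum_mul, Finset.mul_sum, hE]
      _ = √E ^ (n + 1) := by rw [← pow_add]; congr 1; omega

lemma le_mul_add_one_sub {b l : ℝ} (hb : b ≤ 1) (hl : l ≤ 1) : b ≤ b * l + (1 - l) := by
  nlinarith

lemma cliqueSum_succ_le_add_sum_one_sub_mul {W : V → V → ℝ} {a l : V → ℝ}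
    (hW0 : ∀ x y, 0 ≤ W x y) (hW1 : ∀ x y, W x y ≤ 1) (hl1 : ∀ x, l x ≤ 1)
    (ha0 : ∀ x, 0 ≤ a x) (ha1 : ∀ x, a x ≤ 1) (n : ℕ) :
    cliqueSum W a (n + 1) ≤ ∑ v, a v * l v * cliqueSum W (fun x ↦ a x * W v x) n +
      (∑ x, (1 - l x)) * cliqueSum W a n := by
  rw [cliqueSum_succ, Finset.sum_mul, ← Finset.sum_add_distrib]
  refine Finset.sum_le_sum fun v _ ↦ ?_
  have hlink0 (x : V) : 0 ≤ a x * W v x := mul_nonneg (ha0 x) (hW0 v x)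
  calc a v * cliqueSum W (fun x ↦ a x * W v x) n
      ≤ (a v * l v + (1 - l v)) * cliqueSum W (fun x ↦ a x * W v x) n :=
        mul_le_mul_of_nonneg_right (le_mul_add_one_sub (ha1 v) (hl1 v))
          (cliqueSum_nonneg hW0 hlink0 n)
    _ ≤ _ := by
        rw [add_mul]
        gcongr
        · exact sub_nonneg.2 (hl1 v)
        · exact cliqueSum_mono_vertex hW0 hlink0
            (fun x ↦ mul_le_of_le_one_right (ha0 x) (hW1 v x)) n

lemma cliqueSum_le_add_mul_sum_one_sub {W : V → V → ℝ} {l : V → ℝ} (hW0 : ∀ x y, 0 ≤ W x y)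
    (hW1 : ∀ x y, W x y ≤ 1) (hl0 : ∀ x, 0 ≤ l x) (hl1 : ∀ x, l x ≤ 1) (n : ℕ) {a : V → ℝ}
    (ha0 : ∀ x, 0 ≤ a x) (ha1 : ∀ x, a x ≤ 1) :
    cliqueSum W a (n + 1) ≤ cliqueSum W (fun x ↦ a x * l x) (n + 1) +
      (n + 1) * (∑ x, (1 - l x)) * cliqueSum W a n := by
  induction n generalizing a with
  | zero =>
    simp only [zero_add, cliqueSum_one, cliqueSum_zero, Nat.cast_zero, one_mul, mul_one,
      ← Finset.sum_add_distrib]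
    exact Finset.sum_le_sum fun v _ ↦ le_mul_add_one_sub (ha1 v) (hl1 v)
  | succ n ih =>
    set h := ∑ x, (1 - l x)
    have hh0 : 0 ≤ h := Finset.sum_nonneg fun x _ ↦ sub_nonneg.2 (hl1 x)
    let link (v x : V) : ℝ := a x * W v x
    have hlink0 (v x : V) : 0 ≤ link v x := mul_nonneg (ha0 x) (hW0 v x)
    have other_vertices : ∑ v, a v * l v * cliqueSum W (link v) (n + 1) ≤
        cliqueSum W (fun x ↦ a x * l x) (n + 1 + 1) + (n + 1) * h * cliqueSum W a (n + 1) := by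
      rw [cliqueSum_succ W (fun x ↦ a x * l x), cliqueSum_succ W a n, Finset.mul_sum,
        ← Finset.sum_add_distrib]
      refine Finset.sum_le_sum fun v _ ↦ ?_
      have hal0 : 0 ≤ a v * l v := mul_nonneg (ha0 v) (hl0 v)
      calc a v * l v * cliqueSum W (link v) (n + 1)
          ≤ a v * l v * (cliqueSum W (fun x ↦ link v x * l x) (n + 1) +
              (n + 1) * h * cliqueSum W (link v) n) :=
            mul_le_mul_of_nonneg_left
              (ih (hlink0 v) fun x ↦ mul_le_one₀ (ha1 x) (hW0 v x) (hW1 v x)) hal0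
        _ ≤ a v * l v * cliqueSum W (fun x ↦ link v x * l x) (n + 1) +
              a v * ((n + 1) * h * cliqueSum W (link v) n) := by
            rw [mul_add]
            gcongr
            · exact mul_nonneg (by positivity) (cliqueSum_nonneg hW0 (hlink0 v) n)
            · exact mul_le_of_le_one_right (ha0 v) (hl1 v)
        _ = _ := by simp only [link, mul_right_comm (a _) (W v _)]; ring
    have first_vertex := cliqueSum_succ_le_add_sum_one_sub_mul hW0 hW1 hl1 ha0 ha1 (n + 1)
    push_cast
    linarith

end CliqueSum

section CliqueCounting

variable {V : Type*} [Fintype V]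

/-- The kernel `D` has `ℓ²` operator norm at most `θ`; the test vectors share one bound `c` for
their squared norms, which is how the bound gets applied. -/
def OpNormLE (D : V → V → ℝ) (θ : ℝ) : Prop :=
  ∀ (α β : V → ℝ) (c : ℝ), ∑ x, α x ^ 2 ≤ c → ∑ x, β x ^ 2 ≤ c →
    ∑ x, ∑ y, D x y * α x * β y ≤ θ * c

lemma OpNormLE.sum_mul_cliqueSum_le {D s g : V → V → ℝ} {θ : ℝ} (hD : OpNormLE D θ)
    (hs0 : ∀ x y, 0 ≤ s x y) (hsg : ∀ x y, s x y ≤ g x y) (hg1 : ∀ x y, g x y ≤ 1) {a : V → ℝ}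
    (ha0 : ∀ x, 0 ≤ a x) (ha1 : ∀ x, a x ≤ 1) (n : ℕ) :
    ∑ v, ∑ y, D v y * (a v * a y * cliqueSum g (fun x ↦ a x * (s v x * g y x)) n) ≤
      θ * cliqueSum g a (n + 1) := by
  have hg0 (x y : V) : 0 ≤ g x y := (hs0 x y).trans (hsg x y)
  let κ (f : Fin n → V) : ℝ := (∏ i, a (f i)) * cliqueProd g f
  let σ (f : Fin n → V) (v : V) : ℝ := a v * ∏ i, s v (f i)
  let γ (f : Fin n → V) (v : V) : ℝ := a v * ∏ i, g v (f i)
  have hσ0 (f v) : 0 ≤ σ f v := mul_nonneg (ha0 v) (Finset.prod_nonneg fun _ _ ↦ hs0 _ _)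
  have hσγ (f v) : σ f v ≤ γ f v := mul_le_mul_of_nonneg_left
    (Finset.prod_le_prod (fun _ _ ↦ hs0 _ _) fun _ _ ↦ hsg _ _) (ha0 v)
  have hγ1 (f v) : γ f v ≤ 1 := mul_le_one₀ (ha1 v) (Finset.prod_nonneg fun _ _ ↦ hg0 _ _)
    (Finset.prod_le_one (fun _ _ ↦ hg0 _ _) fun _ _ ↦ hg1 _ _)
  have bilinear_le (f) : ∑ v, ∑ y, D v y * σ f v * γ f y ≤ θ * ∑ v, γ f v := by
    refine hD _ _ _ ?_ ?_ <;> refine Finset.sum_le_sum fun v _ ↦ ?_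
    · nlinarith [hσ0 f v, hσγ f v, hγ1 f v]
    · nlinarith [hσ0 f v, hσγ f v, hγ1 f v]
  calc ∑ v, ∑ y, D v y * (a v * a y * cliqueSum g (fun x ↦ a x * (s v x * g y x)) n)
      = ∑ f, κ f * ∑ v, ∑ y, D v y * σ f v * γ f y := by
        simp only [cliqueSum_mul, Finset.mul_sum]
        rw [Finset.sum_comm' (s := Finset.univ (α := Fin n → V)) (t' := Finset.univ)
          (s' := fun _ ↦ Finset.univ) (by simp)]
        refine Finset.sum_congr rfl fun v _ ↦ ?_
        rw [Finset.sum_comm]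
        refine Finset.sum_congr rfl fun f _ ↦ Finset.sum_congr rfl fun y _ ↦ ?_
        simp only [κ, σ, γ, Finset.prod_mul_distrib]
        ring
    _ ≤ ∑ f, κ f * (θ * ∑ v, γ f v) := Finset.sum_le_sum fun f _ ↦ mul_le_mul_of_nonneg_left
        (bilinear_le f) (mul_nonneg (Finset.prod_nonneg fun _ _ ↦ ha0 _) (cliqueProd_nonneg hg0 f))
    _ = θ * cliqueSum g a (n + 1) := by
        simp only [cliqueSum_succ, cliqueSum_mul, Finset.mul_sum]
        rw [Finset.sum_comm]
        refine Finset.sum_congr rfl fun v _ ↦ Finset.sum_congr rfl fun f _ ↦ ?_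
        simp only [κ, γ]
        ring

lemma sum_cliqueSum_link_succ (s : V → V → ℝ) {g : V → V → ℝ} (hsymm : ∀ x y, g x y = g y x)
    (p : ℝ) (a : V → ℝ) (n : ℕ) :
    ∑ v, a v * cliqueSum g (fun x ↦ a x * s v x) (n + 1) =
      ∑ v, ∑ y, (s v y - p * g v y) *
        (a v * a y * cliqueSum g (fun x ↦ a x * (s v x * g y x)) n) +
      p * ∑ y, a y * ∑ v, a v * g y v * cliqueSum g (fun x ↦ a x * g y x * s v x) n := by
  simp only [cliqueSum_succ, Finset.mul_sum]
  rw [Finset.sum_comm (f := fun y v ↦ p * (a y * (a v * g y v * _))), ← Finset.sum_add_distrib]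
  refine Finset.sum_congr rfl fun v _ ↦ ?_
  rw [← Finset.sum_add_distrib]
  refine Finset.sum_congr rfl fun y _ ↦ ?_
  simp only [hsymm y v, mul_right_comm (a _) (g y _), mul_assoc (a _) (s v _)]
  ring

/-- The edges at the first vertex are replaced by `p • g` one at a time, each at the cost of `θ`. -/
lemma OpNormLE.sum_cliqueSum_link_le {s g : V → V → ℝ} {p θ : ℝ}
    (hD : OpNormLE (fun x y ↦ s x y - p * g x y) θ) (hp0 : 0 ≤ p) (hp1 : p ≤ 1) (hθ : 0 ≤ θ)
    (hs0 : ∀ x y, 0 ≤ s x y) (hsg : ∀ x y, s x y ≤ g x y) (hg1 : ∀ x y, g x y ≤ 1)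
    (hsymm : ∀ x y, g x y = g y x) (n : ℕ) {a : V → ℝ} (ha0 : ∀ x, 0 ≤ a x)
    (ha1 : ∀ x, a x ≤ 1) :
    ∑ v, a v * cliqueSum g (fun x ↦ a x * s v x) n ≤
      p ^ n * cliqueSum g a (n + 1) + n * θ * cliqueSum g a n := by
  have hg0 (x y : V) : 0 ≤ g x y := (hs0 x y).trans (hsg x y)
  induction n generalizing a with
  | zero => simp [cliqueSum_zero, cliqueSum_one]
  | succ n ih =>
    have remaining_edges :
        ∑ y, a y * ∑ v, a v * g y v * cliqueSum g (fun x ↦ a x * g y x * s v x) n ≤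
          p ^ n * cliqueSum g a (n + 2) + n * θ * cliqueSum g a (n + 1) := by
      rw [cliqueSum_succ g a (n + 1), cliqueSum_succ g a n, Finset.mul_sum, Finset.mul_sum,
        ← Finset.sum_add_distrib]
      refine Finset.sum_le_sum fun y _ ↦ ?_
      refine (mul_le_mul_of_nonneg_left (ih (fun x ↦ mul_nonneg (ha0 x) (hg0 y x))
        fun x ↦ mul_le_one₀ (ha1 x) (hg0 y x) (hg1 y x)) (ha0 y)).trans_eq ?_
      ring
    have hθa : 0 ≤ n * θ * cliqueSum g a (n + 1) :=
      mul_nonneg (by positivity) (cliqueSum_nonneg hg0 ha0 _)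
    calc ∑ v, a v * cliqueSum g (fun x ↦ a x * s v x) (n + 1)
        ≤ θ * cliqueSum g a (n + 1) +
            p * (p ^ n * cliqueSum g a (n + 2) + n * θ * cliqueSum g a (n + 1)) := by
          rw [sum_cliqueSum_link_succ s hsymm p]
          gcongr
          exact hD.sum_mul_cliqueSum_le hs0 hsg hg1 ha0 ha1 n
      _ ≤ θ * cliqueSum g a (n + 1) +
            (p * (p ^ n * cliqueSum g a (n + 2)) + n * θ * cliqueSum g a (n + 1)) := by
          rw [mul_add]
          linarith [mul_le_of_le_one_left hθa hp1]
      _ = _ := by push_cast; ring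

theorem OpNormLE.cliqueSum_le {s g : V → V → ℝ} {p θ : ℝ}
    (hD : OpNormLE (fun x y ↦ s x y - p * g x y) θ) (hp0 : 0 ≤ p) (hp1 : p ≤ 1) (hθ : 0 ≤ θ)
    (hs0 : ∀ x y, 0 ≤ s x y) (hsg : ∀ x y, s x y ≤ g x y) (hg1 : ∀ x y, g x y ≤ 1)
    (hsymm : ∀ x y, g x y = g y x) (n : ℕ) {a : V → ℝ} (ha0 : ∀ x, 0 ≤ a x)
    (ha1 : ∀ x, a x ≤ 1) :
    cliqueSum s a (n + 1) ≤ p ^ (n + 1).choose 2 * cliqueSum g a (n + 1) +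
      (n + 1).choose 2 * θ * cliqueSum g a n := by
  have hg0 (x y : V) : 0 ≤ g x y := (hs0 x y).trans (hsg x y)
  induction n generalizing a with
  | zero => simp [cliqueSum_one]
  | succ n ih =>
    have hchoose : (n + 1 + 1).choose 2 = (n + 1) + (n + 1).choose 2 := by
      rw [Nat.choose_succ_succ' (n + 1) 1, Nat.choose_one_right]
    set k := (n + 1).choose 2
    have hlink0 (v x : V) : 0 ≤ a x * s v x := mul_nonneg (ha0 x) (hs0 v x)
    have first_vertex : cliqueSum s a (n + 1 + 1) ≤
        p ^ k * ∑ v, a v * cliqueSum g (fun x ↦ a x * s v x) (n + 1) +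
          k * θ * ∑ v, a v * cliqueSum g (fun x ↦ a x * s v x) n := by
      rw [cliqueSum_succ s, Finset.mul_sum, Finset.mul_sum, ← Finset.sum_add_distrib]
      refine Finset.sum_le_sum fun v _ ↦ ?_
      refine (mul_le_mul_of_nonneg_left (ih (hlink0 v) fun x ↦ mul_le_one₀ (ha1 x) (hs0 v x)
        ((hsg v x).trans (hg1 v x))) (ha0 v)).trans_eq ?_
      ring
    have link_le : ∑ v, a v * cliqueSum g (fun x ↦ a x * s v x) n ≤ cliqueSum g a (n + 1) := by
      rw [cliqueSum_succ g a n]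
      exact Finset.sum_le_sum fun v _ ↦ mul_le_mul_of_nonneg_left (cliqueSum_mono_vertex hg0
        (hlink0 v) (fun x ↦ mul_le_mul_of_nonneg_left (hsg v x) (ha0 x)) n) (ha0 v)
    have hθa : 0 ≤ (n + 1 : ℕ) * θ * cliqueSum g a (n + 1) :=
      mul_nonneg (by positivity) (cliqueSum_nonneg hg0 ha0 _)
    calc cliqueSum s a (n + 1 + 1)
        ≤ p ^ k * (p ^ (n + 1) * cliqueSum g a (n + 1 + 1) +
            (n + 1 : ℕ) * θ * cliqueSum g a (n + 1)) + k * θ * cliqueSum g a (n + 1) := by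
          refine first_vertex.trans ?_
          gcongr
          exact hD.sum_cliqueSum_link_le hp0 hp1 hθ hs0 hsg hg1 hsymm (n + 1) ha0 ha1
      _ ≤ p ^ k * (p ^ (n + 1) * cliqueSum g a (n + 1 + 1)) +
            (n + 1 : ℕ) * θ * cliqueSum g a (n + 1) + k * θ * cliqueSum g a (n + 1) := by
          rw [mul_add (p ^ k)]
          linarith [mul_le_of_le_one_left hθa (pow_le_one₀ hp0 hp1 (n := k))]
      _ = _ := by rw [hchoose]; push_cast; ring

end CliqueCounting

section FourCycle

variable {V : Type*} [Fintype V]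

/-- The weighted number of homomorphic 4-cycles `x y x' y'` in the kernel `D`, grouped by the
opposite pair `y, y'`. Equivalently, the fourth power of the Schatten 4-norm of `D`. -/
noncomputable def fourCycleSum (D : V → V → ℝ) : ℝ := ∑ y, ∑ y', (∑ x, D x y * D x y') ^ 2

lemma fourCycleSum_nonneg (D : V → V → ℝ) : 0 ≤ fourCycleSum D :=
  Finset.sum_nonneg fun _ _ ↦ Finset.sum_nonneg fun _ _ ↦ sq_nonneg _

/-- Cauchy–Schwarz, once over `x` and once over `y, y'`. -/
lemma sum_sum_mul_mul_pow_four_le (D : V → V → ℝ) (α β : V → ℝ) :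
    (∑ x, ∑ y, D x y * α x * β y) ^ 4 ≤
      (∑ x, α x ^ 2) ^ 2 * (∑ y, β y ^ 2) ^ 2 * fourCycleSum D := by
  have hx : (∑ x, ∑ y, D x y * α x * β y) ^ 2 ≤
      (∑ x, α x ^ 2) * ∑ x, (∑ y, D x y * β y) ^ 2 := by
    have factor : ∑ x, ∑ y, D x y * α x * β y = ∑ x, α x * ∑ y, D x y * β y := by
      simp only [Finset.mul_sum, mul_assoc, mul_left_comm (α _)]
    exact factor ▸ Finset.sum_mul_sq_le_sq_mul_sq _ _ _
  have expand : ∑ x, (∑ y, D x y * β y) ^ 2 =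
      ∑ z : V × V, (β z.1 * β z.2) * ∑ x, D x z.1 * D x z.2 := by
    simp only [sq, Finset.sum_mul_sum, Fintype.sum_prod_type]
    simp only [Finset.mul_sum]
    rw [Finset.sum_comm]
    refine Finset.sum_congr rfl fun y _ ↦ ?_
    rw [Finset.sum_comm]
    exact Finset.sum_congr rfl fun y' _ ↦ Finset.sum_congr rfl fun x _ ↦ by ring
  have hyy : (∑ x, (∑ y, D x y * β y) ^ 2) ^ 2 ≤ (∑ y, β y ^ 2) ^ 2 * fourCycleSum D := by
    rw [expand]
    refine (Finset.sum_mul_sq_le_sq_mul_sq _ _ _).trans_eq ?_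
    simp only [fourCycleSum, Fintype.sum_prod_type, mul_pow, sq (∑ y, β y ^ 2), Finset.sum_mul_sum]
  calc (∑ x, ∑ y, D x y * α x * β y) ^ 4 = ((∑ x, ∑ y, D x y * α x * β y) ^ 2) ^ 2 := by ring
    _ ≤ ((∑ x, α x ^ 2) * ∑ x, (∑ y, D x y * β y) ^ 2) ^ 2 := by gcongr
    _ = (∑ x, α x ^ 2) ^ 2 * (∑ x, (∑ y, D x y * β y) ^ 2) ^ 2 := by ring
    _ ≤ (∑ x, α x ^ 2) ^ 2 * ((∑ y, β y ^ 2) ^ 2 * fourCycleSum D) := by gcongr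
    _ = _ := by ring

lemma le_add_pow_four_div (y : ℝ) {r : ℝ} (hr : 0 < r) : y ≤ r + y ^ 4 / r ^ 3 := by
  rcases le_total y r with h | h
  · exact h.trans (le_add_of_nonneg_right (by positivity))
  · have hy : 0 ≤ y := hr.le.trans h
    calc y ≤ y * y ^ 3 / r ^ 3 := by rw [le_div_iff₀ (by positivity)]; gcongr
      _ = y ^ 4 / r ^ 3 := by ring
      _ ≤ _ := le_add_of_nonneg_left hr.le

/-- The operator norm is at most `C ^ (1 / 4)` for `C = fourCycleSum D`. Trading it for
`r + C / r ^ 3` makes the bound linear in `C`, hence compatible with taking expectations. -/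
lemma opNormLE_fourCycleSum (D : V → V → ℝ) {r : ℝ} (hr : 0 < r) :
    OpNormLE D (r + fourCycleSum D / r ^ 3) := by
  intro α β c hα hβ
  set X := ∑ x, ∑ y, D x y * α x * β y
  have hβ0 : 0 ≤ ∑ x, β x ^ 2 := Finset.sum_nonneg fun _ _ ↦ sq_nonneg _
  have hα0 : 0 ≤ ∑ x, α x ^ 2 := Finset.sum_nonneg fun _ _ ↦ sq_nonneg _
  have hX : X ^ 4 ≤ c ^ 4 * fourCycleSum D := by
    refine (sum_sum_mul_mul_pow_four_le D α β).trans ?_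
    refine mul_le_mul_of_nonneg_right ?_ (fourCycleSum_nonneg D)
    calc _ ≤ c ^ 2 * c ^ 2 := mul_le_mul (pow_le_pow_left₀ hα0 hα 2)
          (pow_le_pow_left₀ hβ0 hβ 2) (sq_nonneg _) (sq_nonneg c)
      _ = c ^ 4 := by ring
  rcases (hα0.trans hα).eq_or_lt with rfl | hc
  · have hX0 : X = 0 := by
      rw [← pow_eq_zero_iff four_ne_zero]
      exact le_antisymm (by simpa using hX) (Even.pow_nonneg (by decide) X)
    simp [hX0]
  · rw [← div_le_iff₀ hc]
    refine (le_add_pow_four_div (X / c) hr).trans ?_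
    gcongr
    rw [div_pow, div_le_iff₀ (by positivity), mul_comm]
    exact hX

/-- Expanding the square, only the cycles with `x = x'` or `y = y'` escape the first term. -/
lemma fourCycleSum_le (D : V → V → ℝ) :
    fourCycleSum D ≤
      ∑ v ∈ Finset.univ.offDiag, ∑ u ∈ Finset.univ.offDiag,
        D u.1 v.1 * D u.1 v.2 * (D u.2 v.1 * D u.2 v.2) +
      (∑ v, (∑ u, D u v ^ 2) ^ 2 + ∑ u, (∑ v, D u v ^ 2) ^ 2) := by
  have sum_pairs (F : V × V → ℝ) :
      ∑ z, F z = ∑ z ∈ Finset.univ.offDiag, F z + ∑ v, F (v, v) := by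
    rw [← Finset.univ_product_univ, ← Finset.diag_union_offDiag,
      Finset.sum_union (Finset.disjoint_diag_offDiag _), Finset.sum_diag, add_comm]
  have expand (v : V × V) : (∑ u, D u v.1 * D u v.2) ^ 2 =
      ∑ u ∈ Finset.univ.offDiag, D u.1 v.1 * D u.1 v.2 * (D u.2 v.1 * D u.2 v.2) +
        ∑ u, D u v.1 ^ 2 * D u v.2 ^ 2 := by
    rw [sq, Finset.sum_mul_sum, ← Fintype.sum_prod_type', sum_pairs]
    congr 1
    exact Finset.sum_congr rfl fun u _ ↦ by ring
  have equal_left : ∑ v ∈ Finset.univ.offDiag, ∑ u, D u v.1 ^ 2 * D u v.2 ^ 2 ≤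
      ∑ u, (∑ v, D u v ^ 2) ^ 2 := by
    calc _ ≤ ∑ v : V × V, ∑ u, D u v.1 ^ 2 * D u v.2 ^ 2 :=
          Finset.sum_le_sum_of_subset_of_nonneg (Finset.subset_univ _) fun _ _ _ ↦ by positivity
      _ = _ := by
          rw [Finset.sum_comm]
          simp only [sq (∑ v, D _ v ^ 2), Finset.sum_mul_sum, Fintype.sum_prod_type]
  calc fourCycleSum D = ∑ v : V × V, (∑ u, D u v.1 * D u v.2) ^ 2 := by
        rw [fourCycleSum, Fintype.sum_prod_type]
    _ = ∑ v ∈ Finset.univ.offDiag, (∑ u, D u v.1 * D u v.2) ^ 2 + ∑ v, (∑ u, D u v ^ 2) ^ 2 := by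
        simp only [sum_pairs, sq (D _ _)]
    _ ≤ _ := by
        simp only [expand, Finset.sum_add_distrib]
        linarith

end FourCycle

section Expectation

open scoped Finset

variable {N : ℕ} {p : ℝ} {F G : (Fin N → Bool) → ℝ}

/-- The expectation of `F` over `N` independent coin flips, each `true` with probability `p`. -/
noncomputable def expect (p : ℝ) (F : (Fin N → Bool) → ℝ) : ℝ := ∑ x, weight p x * F x

lemma weight_nonneg (hp0 : 0 ≤ p) (hp1 : p ≤ 1) (x : Fin N → Bool) : 0 ≤ weight p x :=
  Finset.prod_nonneg fun i _ ↦ by split_ifs <;> linarith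

lemma expect_mono (hp0 : 0 ≤ p) (hp1 : p ≤ 1) (h : ∀ x, F x ≤ G x) : expect p F ≤ expect p G :=
  Finset.sum_le_sum fun x _ ↦ mul_le_mul_of_nonneg_left (h x) (weight_nonneg hp0 hp1 x)

lemma expect_add (p : ℝ) (F G : (Fin N → Bool) → ℝ) :
    expect p (fun x ↦ F x + G x) = expect p F + expect p G := by
  simp only [expect, mul_add, Finset.sum_add_distrib]

lemma expect_const_mul (p c : ℝ) (F : (Fin N → Bool) → ℝ) :
    expect p (fun x ↦ c * F x) = c * expect p F := by
  simp only [expect, Finset.mul_sum, mul_left_comm]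

lemma expect_sum {ι : Type*} (s : Finset ι) (p : ℝ) (F : ι → (Fin N → Bool) → ℝ) :
    expect p (fun x ↦ ∑ i ∈ s, F i x) = ∑ i ∈ s, expect p (F i) := by
  simp only [expect, Finset.mul_sum]
  exact Finset.sum_comm

lemma expect_prod (p : ℝ) (φ : Fin N → Bool → ℝ) :
    expect p (fun x ↦ ∏ i, φ i (x i)) = ∏ i, (p * φ i true + (1 - p) * φ i false) := by
  have sum_bool (i : Fin N) : p * φ i true + (1 - p) * φ i false =
      ∑ b : Bool, (if b then p else 1 - p) * φ i b := by simp
  simp only [sum_bool, Finset.prod_univ_sum, Fintype.piFinset_univ, expect, weight,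
    Finset.prod_mul_distrib]

lemma expect_const (p c : ℝ) : expect p (fun _ : Fin N → Bool ↦ c) = c := by
  have total : expect p (fun _ : Fin N → Bool ↦ 1) = 1 := by
    simpa using expect_prod p fun (_ : Fin N) _ ↦ 1
  simpa [total] using expect_const_mul p c fun _ : Fin N → Bool ↦ 1

lemma expect_prod_toNat (p : ℝ) (T : Finset (Fin N)) :
    expect p (fun x ↦ ∏ i ∈ T, ((x i).toNat : ℝ)) = p ^ #T := by
  have := expect_prod p fun i b ↦ if i ∈ T then (b.toNat : ℝ) else 1
  simpa [Finset.prod_ite_mem, apply_ite, ← Finset.prod_const, Finset.prod_ite] using this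

lemma expect_mul_toNat_sub_eq_zero (p : ℝ) (t : Fin N)
    (hF : ∀ x b, F (Function.update x t b) = F x) :
    expect p (fun x ↦ F x * ((x t).toNat - p)) = 0 := by
  cases N with
  | zero => exact t.elim0
  | succ n =>
    have eq_false (b : Bool) (y : Fin n → Bool) :
        F (t.insertNth b y) = F (t.insertNth false y) := by
      rw [← hF (t.insertNth false y) b, Fin.update_insertNth]
    have insertNthEquiv_eq (b : Bool) (y : Fin n → Bool) :
        Fin.insertNthEquiv (fun _ ↦ Bool) t (b, y) = t.insertNth b y := rfl
    unfold expect weight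
    rw [← (Fin.insertNthEquiv (fun _ ↦ Bool) t).sum_comp, Fintype.sum_prod_type_right]
    refine Finset.sum_eq_zero fun y _ ↦ ?_
    simp only [insertNthEquiv_eq, Fin.prod_univ_succAbove _ t, Fin.insertNth_apply_same,
      Fin.insertNth_apply_succAbove, Fintype.sum_bool, eq_false true, if_true, Bool.false_eq_true,
      if_false, Bool.toNat_true, Bool.toNat_false, Nat.cast_one, Nat.cast_zero]
    ring

end Expectation

section Martingale

variable {N : ℕ} {p : ℝ}

/-- The process `h` is predictable: its value at turn `t` is decided by the outcomes before `t`. -/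
def IsPredictable {α : Type*} (h : (Fin N → Bool) → Fin N → α) : Prop :=
  ∀ x t b, ∀ t' ≤ t, h (Function.update x t b) t' = h x t'

/-- Condition on everything before the last of the turns involved. -/
lemma expect_prod_sum_mul_sub_eq_zero {ι : Type*} [Fintype ι] [Nonempty ι]
    {h : ι → (Fin N → Bool) → Fin N → ℝ} (h_pred : ∀ i, IsPredictable (h i))
    (h_disj : ∀ i j, i ≠ j → ∀ x t, h i x t * h j x t = 0) (p : ℝ) :
    expect p (fun x ↦ ∏ i, ∑ t, h i x t * ((x t).toNat - p)) = 0 := by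
  simp only [Finset.prod_univ_sum]
  rw [expect_sum]
  refine Finset.sum_eq_zero fun τ _ ↦ ?_
  by_cases hτ : Function.Injective τ
  · obtain ⟨last, -, h_last⟩ := Finset.exists_max_image Finset.univ τ Finset.univ_nonempty
    rw [← expect_mul_toNat_sub_eq_zero (F := fun x ↦ h last x (τ last) *
      ∏ i ∈ Finset.univ.erase last, (h i x (τ i) * ((x (τ i)).toNat - p))) p (τ last)]
    · congr 1 with x
      rw [← Finset.mul_prod_erase _ _ (Finset.mem_univ last)]
      ring
    · intro x b
      congr 1
      · exact h_pred _ _ _ _ _ le_rfl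
      · refine Finset.prod_congr rfl fun i hi ↦ ?_
        rw [h_pred i x _ b _ (h_last i (Finset.mem_univ i)),
          Function.update_of_ne (hτ.ne (Finset.ne_of_mem_erase hi))]
  · obtain ⟨i, j, hij, hne⟩ := Function.not_injective_iff.1 hτ
    refine Finset.sum_eq_zero fun x _ ↦ mul_eq_zero_of_right _ ?_
    rcases mul_eq_zero.1 (h_disj i j hne x (τ i)) with hi | hj
    · exact Finset.prod_eq_zero (Finset.mem_univ i) (by rw [hi, zero_mul])
    · exact Finset.prod_eq_zero (Finset.mem_univ j) (by rw [← hij, hj, zero_mul])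

end Martingale

section QueryProcess

open scoped Finset

variable {V : Type*} {N : ℕ}

/-- The queries `q x t` made in turn `t` against outcomes `x` form a legal play of the game: they
are chosen from past outcomes only, never repeat, and are never loops. -/
structure IsQueryProcess (q : (Fin N → Bool) → Fin N → Sym2 V) : Prop where
  isPredictable : IsPredictable q
  injective : ∀ x, Function.Injective (q x)
  not_isDiag : ∀ x t, ¬ (q x t).IsDiag

/-- The indicator that the pair `e` is queried in turn `t`, and that this turn is among those
retained by the rule `R`. -/
noncomputable def hit (q : (Fin N → Bool) → Fin N → Sym2 V) (R : (Fin N → Bool) → Fin N → Prop)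
    (e : Sym2 V) (x : Fin N → Bool) (t : Fin N) : ℝ :=
  if R x t ∧ q x t = e then 1 else 0

/-- The indicator that the pair `e` is queried in a retained turn. -/
noncomputable def queried (q : (Fin N → Bool) → Fin N → Sym2 V)
    (R : (Fin N → Bool) → Fin N → Prop) (x : Fin N → Bool) (e : Sym2 V) : ℝ :=
  ∑ t, hit q R e x t

/-- The indicator that the pair `e` is successfully queried in a retained turn. -/
noncomputable def built (q : (Fin N → Bool) → Fin N → Sym2 V)
    (R : (Fin N → Bool) → Fin N → Prop) (x : Fin N → Bool) (e : Sym2 V) : ℝ :=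
  ∑ t, hit q R e x t * (x t).toNat

/-- The deviation of the built graph from `p` times the queried graph at the pair `e`, written as a
martingale transform; see `deviation_eq`. -/
noncomputable def deviation (p : ℝ) (q : (Fin N → Bool) → Fin N → Sym2 V)
    (R : (Fin N → Bool) → Fin N → Prop) (x : Fin N → Bool) (e : Sym2 V) : ℝ :=
  ∑ t, hit q R e x t * ((x t).toNat - p)

variable {q : (Fin N → Bool) → Fin N → Sym2 V} {R : (Fin N → Bool) → Fin N → Prop} {p : ℝ}

lemma deviation_eq (p : ℝ) (x : Fin N → Bool) (e : Sym2 V) :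
    deviation p q R x e = built q R x e - p * queried q R x e := by
  simp only [deviation, built, queried, Finset.mul_sum, ← Finset.sum_sub_distrib]
  exact Finset.sum_congr rfl fun t _ ↦ by ring

lemma hit_nonneg (e : Sym2 V) (x : Fin N → Bool) (t : Fin N) : 0 ≤ hit q R e x t := by
  unfold hit
  split_ifs <;> simp

lemma built_nonneg (x : Fin N → Bool) (e : Sym2 V) : 0 ≤ built q R x e :=
  Finset.sum_nonneg fun t _ ↦ mul_nonneg (hit_nonneg e x t) (Nat.cast_nonneg _)

lemma built_le_queried (x : Fin N → Bool) (e : Sym2 V) : built q R x e ≤ queried q R x e :=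
  Finset.sum_le_sum fun t _ ↦
    mul_le_of_le_one_right (hit_nonneg e x t) (by exact_mod_cast Bool.toNat_le (x t))

lemma queried_nonneg (x : Fin N → Bool) (e : Sym2 V) : 0 ≤ queried q R x e :=
  (built_nonneg x e).trans (built_le_queried x e)

lemma queried_le_one {x : Fin N → Bool} (hq : Function.Injective (q x)) (e : Sym2 V) :
    queried q R x e ≤ 1 := by
  simp only [queried, hit, Finset.sum_boole]
  refine mod_cast Finset.card_le_one.2 fun t ht t' ht' ↦ hq ?_
  exact (Finset.mem_filter.1 ht).2.2.trans (Finset.mem_filter.1 ht').2.2.symm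

lemma deviation_sq_le_queried (hp0 : 0 ≤ p) (hp1 : p ≤ 1) {x : Fin N → Bool}
    (hq : Function.Injective (q x)) (e : Sym2 V) :
    deviation p q R x e ^ 2 ≤ queried q R x e := by
  rw [deviation_eq]
  have hb := built_nonneg (q := q) (R := R) x e
  have hbq := built_le_queried (q := q) (R := R) x e
  have hq1 := queried_le_one (R := R) hq e
  have abs_le_one : |built q R x e - p * queried q R x e| ≤ queried q R x e :=
    abs_le.2 ⟨by nlinarith, by nlinarith⟩
  calc _ = |built q R x e - p * queried q R x e| ^ 2 := (sq_abs _).symm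
    _ ≤ queried q R x e ^ 2 := by gcongr
    _ ≤ queried q R x e := pow_le_of_le_one (hb.trans hbq) hq1 two_ne_zero

lemma deviation_diag (hq : IsQueryProcess q) (x : Fin N → Bool) (v : V) :
    deviation p q R x s(v, v) = 0 := by
  refine Finset.sum_eq_zero fun t _ ↦ ?_
  have not_hit : ¬ (R x t ∧ q x t = s(v, v)) := fun h ↦ hq.not_isDiag x t (h.2 ▸ rfl)
  rw [hit, if_neg not_hit, zero_mul]

lemma IsPredictable.hit (hq : IsPredictable q) (hR : IsPredictable R) (e : Sym2 V) :
    IsPredictable (hit q R e) := fun x t b t' h ↦ by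
  simp only [OnlineRamseyGame.hit, hq x t b t' h, hR x t b t' h]

lemma expect_prod_deviation_eq_zero (hq : IsPredictable q) (hR : IsPredictable R) (p : ℝ)
    {ι : Type*} [Fintype ι] [Nonempty ι] {e : ι → Sym2 V} (he : Function.Injective e) :
    expect p (fun x ↦ ∏ i, deviation p q R x (e i)) = 0 := by
  refine expect_prod_sum_mul_sub_eq_zero (fun i ↦ hq.hit hR (e i)) (fun i j hij x t ↦ ?_) p
  by_cases hi : q x t = e i
  · rw [hit, hit, if_neg (c := R x t ∧ q x t = e j), mul_zero]
    exact fun hj ↦ hij (he (hi.symm.trans hj.2))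
  · rw [hit, if_neg (fun h ↦ hi h.2), zero_mul]

lemma expect_deviation_eq_zero (hq : IsPredictable q) (hR : IsPredictable R) (p : ℝ)
    (e : Sym2 V) : expect p (fun x ↦ deviation p q R x e) = 0 := by
  simpa using expect_prod_deviation_eq_zero hq hR p
    (Function.injective_of_subsingleton fun _ : Unit ↦ e)

lemma expect_built (hq : IsPredictable q) (p : ℝ) (e : Sym2 V) :
    expect p (fun x ↦ built q (fun _ _ ↦ True) x e) =
      p * expect p fun x ↦ queried q (fun _ _ ↦ True) x e := by
  have split (x : Fin N → Bool) : built q (fun _ _ ↦ True) x e =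
      deviation p q (fun _ _ ↦ True) x e + p * queried q (fun _ _ ↦ True) x e := by
    rw [deviation_eq]
    ring
  simp only [split]
  rw [expect_add, expect_deviation_eq_zero hq (fun _ _ _ _ _ ↦ rfl), zero_add, expect_const_mul]

lemma expect_deviation_four_cycle_eq_zero (hq : IsQueryProcess q) (hR : IsPredictable R)
    (p : ℝ) {u u' v v' : V} (hu : u ≠ u') (hv : v ≠ v') :
    expect p (fun x ↦ deviation p q R x s(u, v) * deviation p q R x s(u, v') *
      (deviation p q R x s(u', v) * deviation p q R x s(u', v'))) = 0 := by
  by_cases h_disj : u = v ∨ u = v' ∨ u' = v ∨ u' = v'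
  · rcases h_disj with rfl | rfl | rfl | rfl <;>
      simp [deviation_diag hq, expect_const]
  · push Not at h_disj
    obtain ⟨huv, huv', hu'v, hu'v'⟩ := h_disj
    have distinct : Function.Injective ![s(u, v), s(u, v'), s(u', v), s(u', v')] := by
      intro i j hij
      fin_cases i <;> fin_cases j <;> simp_all
    simpa [Fin.prod_univ_four, mul_assoc] using
      expect_prod_deviation_eq_zero hq.isPredictable hR p distinct

/-- The number of turns in which a pair containing `v` is queried. -/
noncomputable def queryDegree (z : Fin N → Sym2 V) (v : V) : ℕ := #{t | v ∈ z t}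

variable [Fintype V]

lemma sum_queryDegree_le (z : Fin N → Sym2 V) : ∑ v, queryDegree z v ≤ 2 * N := by
  have card_mem_le (t : Fin N) : #{v | v ∈ z t} ≤ 2 := by
    have : Finset.univ.filter (· ∈ z t) = (z t).toFinset := by ext; simp
    rw [this, Sym2.card_toFinset]
    split_ifs <;> simp
  calc ∑ v, queryDegree z v = ∑ t, #{v | v ∈ z t} := by
        simp only [queryDegree, Finset.card_filter]
        exact Finset.sum_comm
    _ ≤ ∑ _t : Fin N, 2 := Finset.sum_le_sum fun t _ ↦ card_mem_le t
    _ = 2 * N := by simp [mul_comm]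

lemma sum_queried_eq (x : Fin N → Bool) (v : V) :
    ∑ u, queried q R x s(u, v) = #{t | R x t ∧ v ∈ q x t} := by
  have pair_eq (z : Sym2 V) : ∑ u, (if z = s(u, v) then (1 : ℝ) else 0) =
      if v ∈ z then 1 else 0 := by
    split_ifs with h
    · obtain ⟨w, rfl⟩ := Sym2.mem_iff_exists.1 h
      have same_pair (u : V) : s(v, w) = s(u, v) ↔ w = u := by rw [Sym2.eq_swap, Sym2.congr_left]
      simp only [same_pair, Finset.sum_ite_eq, Finset.mem_univ, if_true]
    · exact Finset.sum_eq_zero fun u _ ↦ if_neg (by rintro rfl; exact h (Sym2.mem_mk_right u v))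
  simp only [queried, hit]
  rw [Finset.sum_comm, ← Finset.sum_boole]
  refine Finset.sum_congr rfl fun t _ ↦ ?_
  by_cases hR : R x t <;> simp [hR, pair_eq]

lemma sum_sum_queried_le (q : (Fin N → Bool) → Fin N → Sym2 V)
    (R : (Fin N → Bool) → Fin N → Prop) (x : Fin N → Bool) :
    ∑ v, ∑ u, queried q R x s(u, v) ≤ 2 * N := by
  simp only [sum_queried_eq]
  calc ∑ v, (#{t | R x t ∧ v ∈ q x t} : ℝ) ≤ ∑ v, (queryDegree (q x) v : ℝ) :=
        Finset.sum_le_sum fun v _ ↦ mod_cast Finset.card_le_card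
          (Finset.monotone_filter_right _ fun _ _ h ↦ h.2)
    _ ≤ 2 * N := mod_cast sum_queryDegree_le (q x)

end QueryProcess

section LightTurns

open scoped Finset

variable {V : Type*} {N : ℕ} {q : (Fin N → Bool) → Fin N → Sym2 V} {L p : ℝ}

/-- A turn is light if, counting the turn itself, each end of the queried pair has so far been
queried at most `L` times. -/
def IsLightTurn (L : ℝ) (z : Fin N → Sym2 V) (t : Fin N) : Prop :=
  ∀ v ∈ z t, (#{t' ∈ Finset.Iic t | v ∈ z t'} : ℝ) ≤ L

lemma IsPredictable.isLightTurn (hq : IsPredictable q) (L : ℝ) :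
    IsPredictable fun x ↦ IsLightTurn L (q x) := by
  intro x t b t' ht'
  have past_eq (v : V) : {t'' ∈ Finset.Iic t' | v ∈ q (Function.update x t b) t''} =
      {t'' ∈ Finset.Iic t' | v ∈ q x t''} :=
    Finset.filter_congr fun t'' ht'' ↦ by rw [hq x t b t'' ((Finset.mem_Iic.1 ht'').trans ht')]
  simp only [IsLightTurn, hq x t b t' ht', past_eq]

lemma built_le_built_isLightTurn {x : Fin N → Bool} {u v : V} (hu : queryDegree (q x) u ≤ L)
    (hv : queryDegree (q x) v ≤ L) :
    built q (fun _ _ ↦ True) x s(u, v) ≤ built q (fun x ↦ IsLightTurn L (q x)) x s(u, v) := by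
  refine Finset.sum_le_sum fun t _ ↦ mul_le_mul_of_nonneg_right ?_ (Nat.cast_nonneg _)
  by_cases h : q x t = s(u, v)
  · have light : IsLightTurn L (q x) t := by
      intro w hw
      refine le_trans (mod_cast Finset.card_le_card
        (Finset.filter_subset_filter _ (Finset.subset_univ _)) : _ ≤ (queryDegree (q x) w : ℝ)) ?_
      rcases Sym2.mem_iff.1 (h ▸ hw) with rfl | rfl
      exacts [hu, hv]
    simp [hit, h, light]
  · simp [hit, h]

variable [Fintype V]

lemma sum_queried_isLightTurn_le (hL : 0 ≤ L) (x : Fin N → Bool) (v : V) :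
    ∑ u, queried q (fun x ↦ IsLightTurn L (q x)) x s(u, v) ≤ L := by
  rw [sum_queried_eq]
  rcases Finset.eq_empty_or_nonempty {t | IsLightTurn L (q x) t ∧ v ∈ q x t} with h | h
  · simpa [h] using hL
  · obtain ⟨last, h_mem, h_last⟩ := Finset.exists_max_image _ id h
    refine le_trans (mod_cast Finset.card_le_card fun t ht ↦ ?_)
      ((Finset.mem_filter.1 h_mem).2.1 v (Finset.mem_filter.1 h_mem).2.2)
    exact Finset.mem_filter.2 ⟨Finset.mem_Iic.2 (h_last t ht), (Finset.mem_filter.1 ht).2.2⟩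

lemma sum_one_sub_indicator_queryDegree_le (hL : 0 < L) (z : Fin N → Sym2 V) :
    ∑ v, (1 - {v | (queryDegree z v : ℝ) ≤ L}.indicator 1 v) ≤ 2 * N / L := by
  calc ∑ v, (1 - {v | (queryDegree z v : ℝ) ≤ L}.indicator 1 v)
      ≤ ∑ v, (queryDegree z v : ℝ) / L := by
        refine Finset.sum_le_sum fun v _ ↦ ?_
        by_cases h : (queryDegree z v : ℝ) ≤ L
        · simpa [h] using by positivity
        · simpa [h] using (one_le_div hL).2 (not_le.1 h).le
    _ ≤ 2 * N / L := by
        rw [← Finset.sum_div]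
        gcongr
        exact mod_cast sum_queryDegree_le z

lemma expect_fourCycleSum_deviation_le (hq : IsQueryProcess q) (hp0 : 0 ≤ p) (hp1 : p ≤ 1)
    (hL : 0 ≤ L) :
    expect p (fun x ↦ fourCycleSum fun u v ↦
      deviation p q (fun x ↦ IsLightTurn L (q x)) x s(u, v)) ≤ 4 * N * L := by
  let D (x : Fin N → Bool) (u v : V) : ℝ := deviation p q (fun x ↦ IsLightTurn L (q x)) x s(u, v)
  have D_symm (x u v) : D x u v = D x v u := by simp only [D, Sym2.eq_swap (a := u)]
  have degenerate_le (x) : ∑ v, (∑ u, D x u v ^ 2) ^ 2 ≤ 2 * N * L := by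
    set g := queried q (fun x ↦ IsLightTurn L (q x)) x
    have row_nonneg (v) : 0 ≤ ∑ u, g s(u, v) := Finset.sum_nonneg fun u _ ↦ queried_nonneg x _
    have sum_sq_le (v) : ∑ u, D x u v ^ 2 ≤ ∑ u, g s(u, v) :=
      Finset.sum_le_sum fun u _ ↦ deviation_sq_le_queried hp0 hp1 (hq.injective x) _
    calc ∑ v, (∑ u, D x u v ^ 2) ^ 2 ≤ ∑ v, (∑ u, g s(u, v)) * L := by
          refine Finset.sum_le_sum fun v _ ↦ ?_
          rw [sq]
          exact mul_le_mul (sum_sq_le v) ((sum_sq_le v).trans (sum_queried_isLightTurn_le hL x v))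
            (by positivity) (row_nonneg v)
      _ ≤ 2 * N * L := by
          rw [← Finset.sum_mul]
          exact mul_le_mul_of_nonneg_right (sum_sum_queried_le q _ x) hL
  calc expect p (fun x ↦ fourCycleSum (D x))
      ≤ expect p fun x ↦ ∑ v ∈ Finset.univ.offDiag, ∑ u ∈ Finset.univ.offDiag,
          D x u.1 v.1 * D x u.1 v.2 * (D x u.2 v.1 * D x u.2 v.2) + 4 * N * L := by
        refine expect_mono hp0 hp1 fun x ↦ (fourCycleSum_le (D x)).trans ?_
        have transpose : ∑ u, (∑ v, D x u v ^ 2) ^ 2 = ∑ v, (∑ u, D x u v ^ 2) ^ 2 := by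
          simp only [D_symm x]
        linarith [degenerate_le x]
    _ = 4 * N * L := by
        rw [expect_add, expect_const, expect_sum, Finset.sum_eq_zero, zero_add]
        intro v hv
        rw [expect_sum]
        exact Finset.sum_eq_zero fun u hu ↦ expect_deviation_four_cycle_eq_zero hq
          (hq.isPredictable.isLightTurn L) p (Finset.mem_offDiag.1 hu).2.2
          (Finset.mem_offDiag.1 hv).2.2

end LightTurns

section ExpectedCliques

variable {V : Type*} [Fintype V] {N : ℕ} {q : (Fin N → Bool) → Fin N → Sym2 V} {p : ℝ}

lemma cliqueSum_queried_le {x : Fin N → Bool} (hq : Function.Injective (q x))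
    (R : (Fin N → Bool) → Fin N → Prop) {n : ℕ} (hn : 2 ≤ n) :
    cliqueSum (fun u v ↦ queried q R x s(u, v)) 1 n ≤ √(2 * N) ^ n := by
  refine (cliqueSum_le_sqrt_pow (fun _ _ ↦ queried_nonneg x _) (fun _ _ ↦ queried_le_one hq _) hn
    (fun _ ↦ zero_le_one)).trans ?_
  gcongr
  simp only [one_mul]
  rw [Finset.sum_comm]
  exact sum_sum_queried_le q R x

lemma cliqueSum_built_le_add_light {x : Fin N → Bool} (hq : Function.Injective (q x)) {L : ℝ}
    (hL : 0 < L) {n : ℕ} (hn : 2 ≤ n) :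
    cliqueSum (fun u v ↦ built q (fun _ _ ↦ True) x s(u, v)) 1 (n + 1) ≤
      cliqueSum (fun u v ↦ built q (fun x ↦ IsLightTurn L (q x)) x s(u, v)) 1 (n + 1) +
        (n + 1) * (2 * N / L) * √(2 * N) ^ n := by
  let W (u v : V) : ℝ := built q (fun _ _ ↦ True) x s(u, v)
  let S : Set V := {v | (queryDegree (q x) v : ℝ) ≤ L}
  have W_nonneg (u v) : 0 ≤ W u v := built_nonneg x _
  have W_le_queried (u v) : W u v ≤ queried q (fun _ _ ↦ True) x s(u, v) := built_le_queried x _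
  have S_nonneg (v) : 0 ≤ S.indicator (1 : V → ℝ) v := Set.indicator_nonneg (by simp) v
  have S_le_one (v) : S.indicator (1 : V → ℝ) v ≤ 1 := Set.indicator_le_self' (by simp) v
  calc cliqueSum W 1 (n + 1)
      ≤ cliqueSum W (S.indicator 1) (n + 1) +
          (n + 1) * (∑ v, (1 - S.indicator 1 v)) * cliqueSum W 1 n := by
        simpa using cliqueSum_le_add_mul_sum_one_sub W_nonneg
          (fun u v ↦ (W_le_queried u v).trans (queried_le_one hq _)) S_nonneg S_le_one n
          (a := 1) (fun _ ↦ zero_le_one) fun _ ↦ le_rfl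
    _ ≤ _ := by
        have cliques_le : cliqueSum W 1 n ≤ √(2 * N) ^ n :=
          (cliqueSum_mono_edge W_nonneg W_le_queried (fun _ ↦ zero_le_one) n).trans
            (cliqueSum_queried_le hq _ hn)
        refine add_le_add (cliqueSum_indicator_le W_nonneg (fun _ _ ↦ built_nonneg x _)
          (fun u hu v hv ↦ built_le_built_isLightTurn hu hv) _) ?_
        gcongr
        · exact cliqueSum_nonneg W_nonneg (fun _ ↦ zero_le_one) n
        · exact sum_one_sub_indicator_queryDegree_le hL (q x)

lemma cliqueSum_built_le (hp0 : 0 ≤ p) (hp1 : p ≤ 1) {x : Fin N → Bool}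
    (hq : Function.Injective (q x)) (R : (Fin N → Bool) → Fin N → Prop) {r : ℝ} (hr : 0 < r)
    {n : ℕ} (hn : 2 ≤ n) :
    cliqueSum (fun u v ↦ built q R x s(u, v)) 1 (n + 1) ≤
      p ^ (n + 1).choose 2 * √(2 * N) ^ (n + 1) + (n + 1).choose 2 *
        (r + fourCycleSum (fun u v ↦ deviation p q R x s(u, v)) / r ^ 3) * √(2 * N) ^ n := by
  set θ := r + fourCycleSum (fun u v ↦ deviation p q R x s(u, v)) / r ^ 3
  have hθ : 0 ≤ θ := add_nonneg hr.le (div_nonneg (fourCycleSum_nonneg _) (by positivity))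
  have opNorm_le : OpNormLE (fun u v ↦ built q R x s(u, v) - p * queried q R x s(u, v)) θ := by
    simp only [← deviation_eq]
    exact opNormLE_fourCycleSum _ hr
  refine (opNorm_le.cliqueSum_le hp0 hp1 hθ (fun _ _ ↦ built_nonneg x _)
    (fun _ _ ↦ built_le_queried x _) (fun _ _ ↦ queried_le_one hq _)
    (fun _ _ ↦ by rw [Sym2.eq_swap]) n (fun _ ↦ zero_le_one) fun _ ↦ le_rfl).trans ?_
  gcongr
  · exact cliqueSum_queried_le hq R (by omega)
  · exact cliqueSum_queried_le hq R hn

lemma expect_cliqueSum_built_le (hq : IsQueryProcess q) (hp0 : 0 ≤ p) (hp1 : p ≤ 1) {r L : ℝ}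
    (hr : 0 < r) (hL : 0 < L) {n : ℕ} (hn : 2 ≤ n) :
    expect p (fun x ↦ cliqueSum (fun u v ↦ built q (fun _ _ ↦ True) x s(u, v)) 1 (n + 1)) ≤
      p ^ (n + 1).choose 2 * √(2 * N) ^ (n + 1) +
        ((n + 1).choose 2 * (r + 4 * N * L / r ^ 3) + (n + 1) * (2 * N / L)) * √(2 * N) ^ n := by
  set k := (n + 1).choose 2
  set R := √(2 * (N : ℝ))
  let C (x : Fin N → Bool) : ℝ :=
    fourCycleSum fun u v ↦ deviation p q (fun x ↦ IsLightTurn L (q x)) x s(u, v)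
  calc expect p (fun x ↦ cliqueSum (fun u v ↦ built q (fun _ _ ↦ True) x s(u, v)) 1 (n + 1))
      ≤ expect p fun x ↦ k / r ^ 3 * R ^ n * C x +
          (p ^ k * R ^ (n + 1) + (k * r + (n + 1) * (2 * N / L)) * R ^ n) := by
        refine expect_mono hp0 hp1 fun x ↦
          ((cliqueSum_built_le_add_light (hq.injective x) hL hn).trans
            (add_le_add_left (cliqueSum_built_le hp0 hp1 (hq.injective x) _ hr hn) _)).trans_eq ?_
        ring
    _ = k / r ^ 3 * R ^ n * expect p C +
          (p ^ k * R ^ (n + 1) + (k * r + (n + 1) * (2 * N / L)) * R ^ n) := by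
        rw [expect_add, expect_const_mul, expect_const]
    _ ≤ k / r ^ 3 * R ^ n * (4 * N * L) +
          (p ^ k * R ^ (n + 1) + (k * r + (n + 1) * (2 * N / L)) * R ^ n) := by
        gcongr
        exact expect_fourCycleSum_deviation_le hq hp0 hp1 hL.le
    _ = _ := by ring

lemma expect_cliqueSum_built_two_le (hq : IsPredictable q) (hp0 : 0 ≤ p) (hp1 : p ≤ 1) :
    expect p (fun x ↦ cliqueSum (fun u v ↦ built q (fun _ _ ↦ True) x s(u, v)) 1 2) ≤
      p * (2 * N) := by
  simp only [cliqueSum_two, Pi.one_apply, one_mul]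
  calc expect p (fun x ↦ ∑ u, ∑ v, built q (fun _ _ ↦ True) x s(u, v))
      = p * expect p fun x ↦ ∑ u, ∑ v, queried q (fun _ _ ↦ True) x s(u, v) := by
        simp only [expect_sum, expect_built hq, Finset.mul_sum]
    _ ≤ p * expect p fun _ : Fin N → Bool ↦ (2 * N : ℝ) := by
        refine mul_le_mul_of_nonneg_left (expect_mono hp0 hp1 fun x ↦ ?_) hp0
        rw [Finset.sum_comm]
        exact sum_sum_queried_le q _ x
    _ = p * (2 * N) := by rw [expect_const]

end ExpectedCliques

section Copies

open scoped Finset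

variable {V : Type*} {N m : ℕ} {z : Fin N → Sym2 V} {x : Fin N → Bool} {p : ℝ}

/-- The labeled copies of `K_m` in the graph formed by those edges `z t` whose turn `t` is a success
of `x`. For a strategy playing `z` against `x`, its size is `copyCount`: see
`copyCount_eq_ncard_copySet`. -/
def copySet (m : ℕ) (z : Fin N → Sym2 V) (x : Fin N → Bool) : Set (Fin m → V) :=
  {f | Function.Injective f ∧ ∀ i j, i ≠ j → ∃ t, z t = s(f i, f j) ∧ x t = true}

lemma one_le_built {q : (Fin N → Bool) → Fin N → Sym2 V} {t : Fin N} (ht : x t = true) :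
    1 ≤ built q (fun _ _ ↦ True) x (q x t) := by
  have term_eq_one : hit q (fun _ _ ↦ True) (q x t) x t * ((x t).toNat : ℝ) = 1 := by
    simp [hit, ht]
  rw [← term_eq_one]
  exact Finset.single_le_sum
    (f := fun s ↦ hit q (fun _ _ ↦ True) (q x t) x s * ((x s).toNat : ℝ))
    (fun s _ ↦ mul_nonneg (hit_nonneg _ _ _) (Nat.cast_nonneg _)) (Finset.mem_univ t)

lemma one_le_cliqueProd_built {q : (Fin N → Bool) → Fin N → Sym2 V} {f : Fin m → V}
    (hf : f ∈ copySet m (q x) x) :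
    1 ≤ cliqueProd (fun u v ↦ built q (fun _ _ ↦ True) x s(u, v)) f := by
  refine Finset.one_le_prod fun i _ ↦ Finset.one_le_prod fun j hj ↦ ?_
  obtain ⟨t, ht, hxt⟩ := hf.2 i j (Finset.mem_Ioi.1 hj).ne
  simpa only [ht] using one_le_built (q := q) hxt

lemma ncard_copySet_le_cliqueSum_built [Fintype V] (q : (Fin N → Bool) → Fin N → Sym2 V) (m : ℕ)
    (x : Fin N → Bool) :
    ((copySet m (q x) x).ncard : ℝ) ≤
      cliqueSum (fun u v ↦ built q (fun _ _ ↦ True) x s(u, v)) 1 m := by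
  rw [Set.ncard_eq_toFinset_card', Finset.cast_card, cliqueSum]
  refine (Finset.sum_le_sum fun f hf ↦ one_le_cliqueProd_built (Set.mem_toFinset.1 hf)).trans ?_
  simp only [Pi.one_apply, Finset.prod_const_one, one_mul]
  exact Finset.sum_le_univ_sum_of_nonneg fun f ↦ cliqueProd_nonneg (fun _ _ ↦ built_nonneg _ _) f

lemma exists_finset_forall_map_val_eq {ι α : Type*} [Finite ι] (z : ι → Sym2 α) :
    ∃ (A : Finset α) (z' : ι → Sym2 A), ∀ i, (z' i).map Subtype.val = z i := by
  cases nonempty_fintype ι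
  let A := Finset.univ.biUnion fun i ↦ (z i).toFinset
  have mem_A : ∀ i, ∀ v ∈ z i, v ∈ A := fun i v hv ↦
    Finset.mem_biUnion.2 ⟨i, Finset.mem_univ i, Sym2.mem_toFinset.2 hv⟩
  exact ⟨A, fun i ↦ (z i).attachWith (mem_A i), fun i ↦ Sym2.attachWith_map_subtypeVal _⟩

lemma copySet_map_subset {W : Type*} {g : W → V} (hg : Function.Injective g) (z : Fin N → Sym2 W)
    (x : Fin N → Bool) (hm : 2 ≤ m) :
    copySet m (fun t ↦ (z t).map g) x ⊆ (g ∘ ·) '' copySet m z x := by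
  rintro f ⟨f_injective, hf⟩
  have : Nontrivial (Fin m) := Fin.nontrivial_iff_two_le.2 hm
  have mem_range : ∀ i, ∃ w, g w = f i := fun i ↦ by
    obtain ⟨j, hji⟩ := exists_ne i
    obtain ⟨t, ht, -⟩ := hf i j hji.symm
    have mem_map : f i ∈ (z t).map g := by
      rw [show (z t).map g = s(f i, f j) from ht]
      exact Sym2.mem_mk_left _ _
    exact (Sym2.mem_map.1 mem_map).imp fun _ ↦ And.right
  choose f' hf' using mem_range
  obtain rfl : g ∘ f' = f := funext hf'
  refine ⟨f', ⟨f_injective.of_comp, fun i j hij ↦ ?_⟩, rfl⟩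
  obtain ⟨t, ht, hxt⟩ := hf i j hij
  exact ⟨t, Sym2.map.injective hg ht, hxt⟩

lemma copySet_finite (z : Fin N → Sym2 V) (x : Fin N → Bool) (hm : 2 ≤ m) :
    (copySet m z x).Finite := by
  obtain ⟨A, z', hz'⟩ := exists_finset_forall_map_val_eq z
  obtain rfl : (fun t ↦ (z' t).map Subtype.val) = z := funext hz'
  exact (Set.toFinite _).subset (copySet_map_subset Subtype.val_injective z' x hm)

lemma exists_finset_card_le_forall_mem_copySet {f : Fin m → V} (hf : Function.Injective f)
    (hz : ∀ i j, i ≠ j → ∃ t, z t = s(f i, f j)) :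
    ∃ T : Finset (Fin N), #T ≤ m.choose 2 ∧ ∀ x : Fin N → Bool, (∀ t ∈ T, x t = true) →
      f ∈ copySet m z x := by
  have exists_turn : ∀ e : {e : Sym2 (Fin m) // ¬ e.IsDiag}, ∃ t, z t = e.1.map f := by
    rintro ⟨⟨i, j⟩, hij⟩
    exact hz i j hij
  choose turn hturn using exists_turn
  refine ⟨Finset.univ.image turn, ?_, fun x hx ↦ ⟨hf, fun i j hij ↦ ?_⟩⟩
  · refine Finset.card_image_le.trans_eq ?_
    rw [Finset.card_univ, Sym2.card_subtype_not_diag, Fintype.card_fin]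
  · have not_isDiag : ¬ s(i, j).IsDiag := hij
    exact ⟨turn ⟨s(i, j), not_isDiag⟩, hturn ⟨s(i, j), not_isDiag⟩,
      hx _ (Finset.mem_image_of_mem _ (Finset.mem_univ _))⟩

lemma prod_toNat_le_ite {ι : Type*} {T : Finset ι} {x : ι → Bool} {P : Prop} [Decidable P]
    (h : (∀ t ∈ T, x t = true) → P) : ∏ t ∈ T, ((x t).toNat : ℝ) ≤ if P then 1 else 0 := by
  by_cases hx : ∀ t ∈ T, x t = true
  · rw [if_pos (h hx)]
    exact (Finset.prod_eq_one fun t ht ↦ by simp [hx t ht]).le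
  · push Not at hx
    obtain ⟨t, ht, hxt⟩ := hx
    rw [Finset.prod_eq_zero ht (by simp [hxt])]
    split_ifs <;> norm_num

lemma pow_choose_two_mul_card_le_expect (hp0 : 0 ≤ p) (hp1 : p ≤ 1) (hm : 2 ≤ m)
    {S : Finset (Fin m → V)} (hS : ∀ f ∈ S, Function.Injective f)
    (hz : ∀ f ∈ S, ∀ i j, i ≠ j → ∃ t, z t = s(f i, f j)) :
    p ^ m.choose 2 * #S ≤ expect p fun x ↦ ((copySet m z x).ncard : ℝ) := by
  have exists_turns := fun f hf ↦ exists_finset_card_le_forall_mem_copySet (hS f hf) (hz f hf)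
  choose! T card_T mem_copySet using exists_turns
  have sum_prod_le : ∀ x : Fin N → Bool,
      ∑ f ∈ S, ∏ t ∈ T f, ((x t).toNat : ℝ) ≤ (copySet m z x).ncard := fun x ↦ by
    refine (Finset.sum_le_sum fun f hf ↦ prod_toNat_le_ite (mem_copySet f hf x)).trans ?_
    rw [Finset.sum_boole, Nat.cast_le, ← Set.ncard_coe_finset]
    exact Set.ncard_le_ncard (fun _ hf ↦ (Finset.mem_filter.1 (Finset.mem_coe.1 hf)).2)
      (copySet_finite z x hm)
  calc p ^ m.choose 2 * #S = ∑ _ ∈ S, p ^ m.choose 2 := by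
        rw [Finset.sum_const, nsmul_eq_mul, mul_comm]
    _ ≤ ∑ f ∈ S, expect p fun x ↦ ∏ t ∈ T f, ((x t).toNat : ℝ) :=
        Finset.sum_le_sum fun f hf ↦ by
          rw [expect_prod_toNat]
          exact pow_le_pow_of_le_one hp0 hp1 (card_T f hf)
    _ = expect p fun x ↦ ∑ f ∈ S, ∏ t ∈ T f, ((x t).toNat : ℝ) := (expect_sum ..).symm
    _ ≤ expect p fun x ↦ ((copySet m z x).ncard : ℝ) := expect_mono hp0 hp1 sum_prod_le

end Copies

section Play

variable {Q : List Bool → Sym2 ℕ} {N m : ℕ} {p : ℝ}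

/-- The pairs queried by the strategy `Q` against the outcome `x`. -/
def play (Q : List Bool → Sym2 ℕ) (N : ℕ) (x : Fin N → Bool) (t : Fin N) : Sym2 ℕ :=
  Q (histSeq (extSeq x) t)

lemma extSeq_coe (x : Fin N → Bool) (t : Fin N) : extSeq x t = x t := by
  simp [extSeq]

lemma isPredictable_play (Q : List Bool → Sym2 ℕ) (N : ℕ) : IsPredictable (play Q N) := by
  intro x t b t' htt'
  refine congrArg Q (List.map_congr_left fun i hi ↦ ?_)
  have hit' : i < t' := List.mem_range.1 hi
  lift i to Fin N using hit'.trans t'.2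
  rw [extSeq_coe, extSeq_coe, Function.update_of_ne ((Fin.lt_def.2 hit').trans_le htt').ne]

lemma ValidBuilder.play_injective (hQ : ValidBuilder Q) (x : Fin N → Bool) :
    Function.Injective (play Q N x) := by
  refine .of_lt_imp_ne fun s t hst ↦ ?_
  have take_eq : (histSeq (extSeq x) t).take s = histSeq (extSeq x) s := by
    simp [histSeq, ← List.map_take, List.take_range, min_eq_left (Fin.le_def.1 hst.le)]
  simpa only [play, take_eq] using hQ.2 (histSeq (extSeq x) t) s (by simpa [histSeq] using hst)

lemma ValidBuilder.isQueryProcess_play (hQ : ValidBuilder Q) (N : ℕ) :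
    IsQueryProcess (play Q N) where
  isPredictable := isPredictable_play Q N
  injective := hQ.play_injective
  not_isDiag _ _ := hQ.1 _

lemma copyCount_eq_ncard_copySet (m : ℕ) (Q : List Bool → Sym2 ℕ) (x : Fin N → Bool) :
    copyCount m (fun t ↦ Q (histSeq (extSeq x) t)) (extSeq x) N =
      (copySet m (play Q N x) x).ncard := by
  refine congrArg Set.ncard (Set.ext fun f ↦ and_congr_right fun _ ↦ ?_)
  simp only [Fin.exists_iff, play, ← extSeq_coe x, exists_prop]

lemma expectedCopies_eq_expect (m : ℕ) (Q : List Bool → Sym2 ℕ) (N : ℕ) (p : ℝ) :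
    expectedCopies m Q N p = expect p fun x ↦ ((copySet m (play Q N x) x).ncard : ℝ) := by
  simp only [expectedCopies, copyCount_eq_ncard_copySet, expect]

lemma IsQueryProcess.of_map {V W : Type*} {q : (Fin N → Bool) → Fin N → Sym2 W} {g : W → V}
    (hg : Function.Injective g) (hq : IsQueryProcess fun x t ↦ (q x t).map g) :
    IsQueryProcess q where
  isPredictable x t b t' htt' := Sym2.map.injective hg (hq.isPredictable x t b t' htt')
  injective x := (hq.injective x).of_comp (f := Sym2.map g)
  not_isDiag x t h := hq.not_isDiag x t ((Sym2.isDiag_map hg).2 h)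

/-- Copies only use vertices that occur in some query, so a finite vertex set suffices. -/
lemma ValidBuilder.exists_isQueryProcess_expectedCopies_le (hQ : ValidBuilder Q) (hp0 : 0 ≤ p)
    (hp1 : p ≤ 1) (hm : 2 ≤ m) (N : ℕ) :
    ∃ (A : Finset ℕ) (q : (Fin N → Bool) → Fin N → Sym2 A), IsQueryProcess q ∧
      expectedCopies m Q N p ≤
        expect p fun x ↦ cliqueSum (fun u v ↦ built q (fun _ _ ↦ True) x s(u, v)) 1 m := by
  obtain ⟨A, q, hq⟩ := exists_finset_forall_map_val_eq (Function.uncurry (play Q N))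
  have map_val_eq : play Q N = fun x t ↦ (q (x, t)).map Subtype.val :=
    funext fun x ↦ funext fun t ↦ (hq (x, t)).symm
  refine ⟨A, Function.curry q,
    .of_map Subtype.val_injective (map_val_eq ▸ hQ.isQueryProcess_play N), ?_⟩
  rw [expectedCopies_eq_expect]
  refine expect_mono hp0 hp1 fun x ↦ le_trans ?_ (ncard_copySet_le_cliqueSum_built _ m x)
  rw [map_val_eq, Nat.cast_le]
  exact (Set.ncard_le_ncard (copySet_map_subset Subtype.val_injective _ x hm)
    (Set.toFinite _)).trans (Set.ncard_image_le (Set.toFinite _))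

end Play

section UpperBound

variable {Q : List Bool → Sym2 ℕ} {N m n : ℕ} {p ε : ℝ}

lemma ValidBuilder.expectedCopies_two_le (hQ : ValidBuilder Q) (hp0 : 0 ≤ p) (hp1 : p ≤ 1)
    (N : ℕ) : expectedCopies 2 Q N p ≤ p * (2 * N) := by
  obtain ⟨A, q, hq, expectedCopies_le⟩ :=
    hQ.exists_isQueryProcess_expectedCopies_le hp0 hp1 le_rfl N
  exact expectedCopies_le.trans (expect_cliqueSum_built_two_le hq.isPredictable hp0 hp1)

lemma ValidBuilder.expectedCopies_succ_le (hQ : ValidBuilder Q) (hp0 : 0 ≤ p) (hp1 : p ≤ 1)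
    (hn : 2 ≤ n) {N : ℕ} (hN : 0 < N) {η : ℝ} (hη : 0 < η) :
    expectedCopies (n + 1) Q N p ≤ p ^ (n + 1).choose 2 * √(2 * N) ^ (n + 1) +
      (2 * (n + 1).choose 2 * η * √(2 * N) + 2 * (n + 1) / η ^ 4) * √(2 * N) ^ n := by
  have N_pos : (0 : ℝ) < N := Nat.cast_pos.2 hN
  obtain ⟨A, q, hq, expectedCopies_le⟩ :=
    hQ.exists_isQueryProcess_expectedCopies_le hp0 hp1 (by lia : 2 ≤ n + 1) N
  set R := √(2 * (N : ℝ))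
  have R_pos : 0 < R := Real.sqrt_pos.2 (by positivity)
  have R_sq : R ^ 2 = 2 * N := Real.sq_sqrt (by positivity)
  have four_cycle_term : 4 * N * (η ^ 4 * N) / (η * R) ^ 3 = η * R := by
    rw [div_eq_iff (by positivity)]
    linear_combination (-(η ^ 4) * (R ^ 2 + 2 * N)) * R_sq
  have heavy_term : (n + 1) * (2 * N / (η ^ 4 * N)) = 2 * (n + 1) / η ^ 4 := by
    field_simp
  refine expectedCopies_le.trans ((expect_cliqueSum_built_le hq hp0 hp1
    (mul_pos hη R_pos) (mul_pos (pow_pos hη 4) N_pos) hn).trans_eq ?_)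
  rw [four_cycle_term, heavy_term]
  ring

lemma tendsto_sqrt_two_mul_natCast_atTop :
    Filter.Tendsto (fun N : ℕ ↦ √(2 * (N : ℝ))) .atTop .atTop :=
  Real.tendsto_sqrt_atTop.comp (tendsto_natCast_atTop_atTop.const_mul_atTop two_pos)

lemma eventually_expectedCopies_succ_le (hp0 : 0 < p) (hp1 : p ≤ 1) (hε : 0 < ε) (hn : 2 ≤ n) :
    ∀ᶠ N : ℕ in .atTop, ∀ Q, ValidBuilder Q →
      expectedCopies (n + 1) Q N p ≤ (1 + ε) * p ^ (n + 1).choose 2 * √(2 * N) ^ (n + 1) := by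
  have choose_pos : (0 : ℝ) < (n + 1).choose 2 := Nat.cast_pos.2 (Nat.choose_pos (by lia))
  set k := (n + 1).choose 2
  obtain ⟨η, hη, η_eq⟩ : ∃ η > 0, 2 * k * η = ε * p ^ k / 2 :=
    ⟨ε * p ^ k / (4 * k), by positivity, by field_simp; norm_num⟩
  filter_upwards [Filter.eventually_gt_atTop 0,
    tendsto_sqrt_two_mul_natCast_atTop.eventually_ge_atTop
      (2 * (n + 1) / η ^ 4 / (ε * p ^ k / 2))] with N hN le_sqrt Q hQ
  rw [div_le_iff₀ (by positivity)] at le_sqrt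
  set R := √(2 * (N : ℝ))
  calc expectedCopies (n + 1) Q N p
      ≤ p ^ k * R ^ (n + 1) + (2 * k * η * R + 2 * (n + 1) / η ^ 4) * R ^ n :=
        hQ.expectedCopies_succ_le hp0.le hp1 hn hN hη
    _ ≤ p ^ k * R ^ (n + 1) + (ε * p ^ k / 2 * R + R * (ε * p ^ k / 2)) * R ^ n := by
        rw [η_eq]
        gcongr
    _ = (1 + ε) * p ^ k * R ^ (n + 1) := by ring

lemma eventually_expectedCopies_le (hp0 : 0 < p) (hp1 : p ≤ 1) (hε : 0 < ε) (hm : 2 ≤ m) :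
    ∀ᶠ N : ℕ in .atTop, ∀ Q, ValidBuilder Q →
      expectedCopies m Q N p ≤ (1 + ε) * p ^ m.choose 2 * √(2 * N) ^ m := by
  obtain rfl | hm' := hm.eq_or_lt
  · refine .of_forall fun N Q hQ ↦ (hQ.expectedCopies_two_le hp0.le hp1 N).trans ?_
    rw [Real.sq_sqrt (by positivity), Nat.choose_self, pow_one]
    gcongr
    exact le_mul_of_one_le_left hp0.le (le_add_of_nonneg_right hε.le)
  · obtain ⟨n, rfl⟩ := Nat.exists_eq_succ_of_ne_zero (by lia : m ≠ 0)
    exact eventually_expectedCopies_succ_le hp0 hp1 hε (Nat.le_of_lt_succ hm')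

end UpperBound

section LowerBound

open scoped Finset

variable {N m n : ℕ} {p ε : ℝ}

lemma exists_injective_forall_mem_exists_lt_card {α : Type*} [Infinite α] (s : Finset α) :
    ∃ e : ℕ → α, Function.Injective e ∧ ∀ a ∈ s, ∃ t < #s, e t = a := by
  have : Infinite ↥((s : Set α)ᶜ) := s.finite_toSet.infinite_compl.to_subtype
  let tail := Infinite.natEmbedding ↥((s : Set α)ᶜ)
  refine ⟨fun t ↦ if h : t < #s then s.equivFin.symm ⟨t, h⟩ else tail t, ?_, fun a ha ↦ ?_⟩
  · refine .of_lt_imp_ne fun t t' htt' h ↦ ?_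
    split_ifs at h with ht ht' ht'
    · simp [htt'.ne] at h
    · exact (tail t').2 (h ▸ (s.equivFin.symm ⟨t, ht⟩).2)
    · exact ht (htt'.trans ht')
    · exact htt'.ne (tail.injective (Subtype.val_injective h))
  · exact ⟨s.equivFin ⟨a, ha⟩, (s.equivFin ⟨a, ha⟩).2, by simp⟩

lemma exists_injective_forall_ne_exists_lt_choose_two (n : ℕ) :
    ∃ e : ℕ → Sym2 ℕ, Function.Injective e ∧ (∀ t, ¬ (e t).IsDiag) ∧
      ∀ i j : Fin n, i ≠ j → ∃ t < n.choose 2, e t = s((i : ℕ), (j : ℕ)) := by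
  have : Infinite {e : Sym2 ℕ // ¬ e.IsDiag} :=
    .of_injective (fun i ↦ ⟨s(0, i + 1), by simp⟩) fun i j h ↦ by simpa using h
  let lift : {e : Sym2 (Fin n) // ¬ e.IsDiag} ↪ {e : Sym2 ℕ // ¬ e.IsDiag} :=
    (Function.Embedding.sym2Map Fin.valEmbedding).subtypeMap fun e he h ↦
      he ((Sym2.isDiag_map Fin.val_injective).1 h)
  obtain ⟨e, e_injective, he⟩ :=
    exists_injective_forall_mem_exists_lt_card (Finset.univ.map lift)
  rw [Finset.card_map, Finset.card_univ, Sym2.card_subtype_not_diag, Fintype.card_fin] at he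
  refine ⟨fun t ↦ e t, Subtype.val_injective.comp e_injective, fun t ↦ (e t).2, fun i j hij ↦ ?_⟩
  have not_isDiag : ¬ s(i, j).IsDiag := hij
  obtain ⟨t, ht, hte⟩ := he (lift ⟨s(i, j), not_isDiag⟩) (by simp)
  exact ⟨t, ht, congrArg Subtype.val hte⟩

lemma exists_pow_mul_descFactorial_le_expectedCopies (hp0 : 0 ≤ p) (hp1 : p ≤ 1) (hm : 2 ≤ m)
    (hN : n.choose 2 ≤ N) : ∃ Q, ValidBuilder Q ∧
      p ^ m.choose 2 * n.descFactorial m ≤ expectedCopies m Q N p := by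
  obtain ⟨e, e_injective, e_not_isDiag, he⟩ := exists_injective_forall_ne_exists_lt_choose_two n
  have valid : ValidBuilder fun h ↦ e h.length := by
    refine ⟨fun h ↦ e_not_isDiag _, fun h i hi heq ↦ ?_⟩
    rw [e_injective.eq_iff, List.length_take] at heq
    lia
  refine ⟨_, valid, ?_⟩
  have play_eq : ∀ x : Fin N → Bool, play (fun h ↦ e h.length) N x = fun t : Fin N ↦ e t :=
    fun x ↦ funext fun t ↦ by simp [play, histSeq]
  let tuples : (Fin m ↪ Fin n) ↪ (Fin m → ℕ) :=
    ⟨fun f i ↦ f i, fun f g h ↦ DFunLike.ext _ _ fun i ↦ Fin.ext (congrFun h i)⟩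
  have card_tuples : #(Finset.univ.map tuples) = n.descFactorial m := by simp
  simp only [expectedCopies_eq_expect, play_eq, ← card_tuples]
  refine pow_choose_two_mul_card_le_expect hp0 hp1 hm ?_ ?_ <;>
    simp only [Finset.mem_map, Finset.mem_univ, true_and, forall_exists_index,
      forall_apply_eq_imp_iff]
  · exact fun f ↦ Fin.val_injective.comp f.injective
  · intro f i j hij
    obtain ⟨t, ht, hte⟩ := he (f i) (f j) (f.injective.ne hij)
    exact ⟨⟨t, ht.trans_le hN⟩, hte⟩

lemma choose_two_sqrt_two_mul_le (N : ℕ) : (Nat.sqrt (2 * N)).choose 2 ≤ N := by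
  rw [Nat.choose_two_right]
  refine Nat.div_le_of_le_mul ((Nat.mul_le_mul_left _ (Nat.sub_le _ _)).trans (Nat.sqrt_le _))

lemma sqrt_two_mul_sub_pow_le_descFactorial (hN : (m : ℝ) ≤ √(2 * N)) :
    (√(2 * N) - m) ^ m ≤ ((Nat.sqrt (2 * N)).descFactorial m : ℝ) := by
  set n := Nat.sqrt (2 * N)
  have sqrt_le : √(2 * (N : ℝ)) ≤ (n + 1 : ℕ) := by
    have := Real.real_sqrt_le_nat_sqrt_succ (a := 2 * N)
    exact_mod_cast this
  have sub_le : √(2 * N) - m ≤ ((n + 1 - m : ℕ) : ℝ) :=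
    sub_le_iff_le_add.2 (sqrt_le.trans (by exact_mod_cast le_tsub_add))
  calc (√(2 * N) - m) ^ m ≤ ((n + 1 - m : ℕ) : ℝ) ^ m :=
        pow_le_pow_left₀ (sub_nonneg.2 hN) sub_le m
    _ ≤ n.descFactorial m := by exact_mod_cast Nat.pow_sub_le_descFactorial n m

lemma one_sub_mul_pow_le_sub_pow {R : ℝ} (hmR : m ≤ R) (hεR : (m : ℝ) ^ 2 ≤ ε * R) (hR : 0 < R) :
    (1 - ε) * R ^ m ≤ (R - m) ^ m := by
  have sub_eq : R - m = (1 + -(m / R)) * R := by field_simp; ring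
  have m_mul_div_le : m * (m / R) ≤ ε := by
    rw [← mul_div_assoc, ← sq]
    exact (div_le_iff₀ hR).2 hεR
  have neg_two_le : -2 ≤ -(m / R) := by linarith [(div_le_one hR).2 hmR]
  rw [sub_eq, mul_pow]
  gcongr
  linarith [one_add_mul_le_pow neg_two_le m]

lemma eventually_exists_le_expectedCopies (hp0 : 0 ≤ p) (hp1 : p ≤ 1) (hε : 0 < ε) (hm : 2 ≤ m) :
    ∀ᶠ N : ℕ in .atTop, ∃ Q, ValidBuilder Q ∧
      (1 - ε) * p ^ m.choose 2 * √(2 * N) ^ m ≤ expectedCopies m Q N p := by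
  filter_upwards [tendsto_sqrt_two_mul_natCast_atTop.eventually_ge_atTop (m : ℝ),
    tendsto_sqrt_two_mul_natCast_atTop.eventually_ge_atTop ((m : ℝ) ^ 2 / ε),
    tendsto_sqrt_two_mul_natCast_atTop.eventually_gt_atTop 0] with N hmR hεR hR
  obtain ⟨Q, hQ, le_expectedCopies⟩ :=
    exists_pow_mul_descFactorial_le_expectedCopies hp0 hp1 hm (choose_two_sqrt_two_mul_le N)
  refine ⟨Q, hQ, le_trans ?_ le_expectedCopies⟩
  rw [mul_right_comm, mul_comm]
  gcongr
  exact (one_sub_mul_pow_le_sub_pow hmR ((div_le_iff₀' hε).1 hεR) hR).trans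
    (sqrt_two_mul_sub_pow_le_descFactorial hmR)

end LowerBound

section Value

variable {N m : ℕ} {p B : ℝ}

lemma ValidBuilder.expectedCopies_le_tQuery {Q : List Bool → Sym2 ℕ} (hQ : ValidBuilder Q)
    (hB : ∀ Q, ValidBuilder Q → expectedCopies m Q N p ≤ B) :
    expectedCopies m Q N p ≤ tQuery m p N :=
  le_csSup ⟨B, by rintro _ ⟨Q', hQ', rfl⟩; exact hB Q' hQ'⟩ ⟨Q, hQ, rfl⟩

lemma ValidBuilder.tQuery_le {Q : List Bool → Sym2 ℕ} (hQ : ValidBuilder Q)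
    (hB : ∀ Q, ValidBuilder Q → expectedCopies m Q N p ≤ B) : tQuery m p N ≤ B :=
  csSup_le ⟨_, Q, hQ, rfl⟩ <| by rintro _ ⟨Q', hQ', rfl⟩; exact hB Q' hQ'

lemma rpow_natCast_div_two {y : ℝ} (hy : 0 ≤ y) (m : ℕ) : y ^ ((m : ℝ) / 2) = √y ^ m := by
  rw [Real.sqrt_eq_rpow, ← Real.rpow_natCast, ← Real.rpow_mul hy, one_div_mul_eq_div]

end Value

theorem stmt10 (m : ℕ) (hm : 2 ≤ m) (p : ℝ) (hp : p ∈ Set.Ioo (0 : ℝ) 1)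
    (ε : ℝ) (hε : 0 < ε) :
    ∃ C : ℝ, 0 < C ∧ ∀ N : ℕ,
      C * p ^ (-(2 * (m : ℝ) - 1)) * (Real.log (1 / p)) ^ 2 ≤ (N : ℝ) →
      (1 - ε) * p ^ (m.choose 2 : ℕ) * (2 * (N : ℝ)) ^ ((m : ℝ) / 2) ≤ tQuery m p N ∧
        tQuery m p N ≤ (1 + ε) * p ^ (m.choose 2 : ℕ) * (2 * (N : ℝ)) ^ ((m : ℝ) / 2) := by
  obtain ⟨hp0, hp1⟩ := hp
  obtain ⟨N₀, hN₀⟩ := Filter.eventually_atTop.1 <|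
    (eventually_exists_le_expectedCopies hp0.le hp1.le hε hm).and
      (eventually_expectedCopies_le hp0 hp1.le hε hm)
  set c := p ^ (-(2 * (m : ℝ) - 1)) * Real.log (1 / p) ^ 2 with hc
  have c_pos : 0 < c :=
    mul_pos (Real.rpow_pos_of_pos hp0 _) (pow_pos (Real.log_pos (one_lt_one_div hp0 hp1)) 2)
  refine ⟨(N₀ + 1) / c, by positivity, fun N hN ↦ ?_⟩
  rw [mul_assoc, ← hc, div_mul_cancel₀ _ c_pos.ne'] at hN
  obtain ⟨⟨Q, hQ, le_expectedCopies⟩, forall_expectedCopies_le⟩ :=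
    hN₀ N (by exact_mod_cast (lt_add_one (N₀ : ℝ)).le.trans hN)
  rw [rpow_natCast_div_two (by positivity)]
  exact ⟨le_expectedCopies.trans (hQ.expectedCopies_le_tQuery forall_expectedCopies_le),
    hQ.tQuery_le forall_expectedCopies_le⟩

end OnlineRamseyGame
end

section
/- For each integer n ≥ 2, let p = 20·log(n)/n, let r = ⌊10⁻⁶·n²/(log n)²⌋, and let G be the Erdős–Rényi random graph G(r,p). Then the probability that there exists a set S of n vertices of G such that more than n²/10 unordered pairs of vertices of S have a common neighbor outside S tends to 0 as n → ∞. Here log denotes the natural logarithm. -/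
open scoped Classical

namespace OnlineRamseyGame

open MeasureTheory

/-- The Bernoulli measure on `Bool` with success probability `p`. -/
noncomputable def bern (p : ℝ) : Measure Bool :=
  ENNReal.ofReal p • Measure.dirac true + ENNReal.ofReal (1 - p) • Measure.dirac false

instance (p : ℝ) : IsFiniteMeasure (bern p) := by
  constructor
  simp [bern, Measure.add_apply, Measure.smul_apply]

/-- The Erdős–Rényi measure: each pair of vertices is an edge independently with
probability `p`. -/
noncomputable def gnp (r : ℕ) (p : ℝ) : Measure (Sym2 (Fin r) → Bool) :=
  Measure.pi fun _ => bern p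

/-- The number of unordered pairs of distinct vertices of `S` having a common
neighbor outside `S` in the graph with edge indicator `ω`. -/
noncomputable def badPairCount (r : ℕ) (S : Finset (Fin r)) (ω : Sym2 (Fin r) → Bool) : ℕ :=
  (Finset.univ.filter (fun e : Sym2 (Fin r) =>
    ¬ e.IsDiag ∧ (∀ v ∈ e, v ∈ S) ∧ ∃ w, w ∉ S ∧ ∀ v ∈ e, ω s(w, v) = true)).card

noncomputable def rr (n : ℕ) : ℕ := ⌊(n : ℝ) ^ 2 / (10 ^ 6 * (Real.log n) ^ 2)⌋₊

noncomputable def pp (n : ℕ) : ℝ := 20 * Real.log n / n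

/-!
Let `X_w` be the number of neighbors in `S` of a vertex `w ∉ S`. The number of bad pairs of `S` is
at most `∑ X_w ^ 2 / 2`, and for fixed `S` the `X_w` are independent, being functions of disjoint
stars of edges. The square of a binomial variable has no useful exponential moment, so
`lam * X_w ^ 2 / 2` is replaced by a linear function beyond `X_w = 1 / lam`. With
`lam = 30 log n / n`, the Chernoff exponent `lam * n ^ 2 / 10 = 3 n log n` exceeds the logarithm
`≤ 2 n log n` of the number of sets `S`, so a union bound over `S` controls the capped sums. The cap
is inactive unless some vertex has degree at least `1 / lam`, which is far above the expected
degree, so a second union bound, over vertices, removes it.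
-/

open ProbabilityTheory

section ProductMeasure

theorem apply_updateFinset_restrict_of_dependsOn {ι : Type*} {Ω : ι → Type*} {β : Type*}
    {A : Finset ι} {f : (∀ i, Ω i) → β} (hf : DependsOn f A) (x y : ∀ i, Ω i) :
    f (Function.updateFinset x A (A.restrict y)) = f y :=
  hf fun i hi => by simp [Function.updateFinset, Finset.mem_coe.1 hi]

variable {ι : Type*} [Fintype ι] {Ω : ι → Type*} [∀ i, MeasurableSpace (Ω i)]
  {μ : ∀ i, Measure (Ω i)} [∀ i, IsProbabilityMeasure (μ i)]

theorem indepFun_pi_of_dependsOn {β γ : Type*} [MeasurableSpace β] [MeasurableSpace γ]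
    {A B : Finset ι} (hAB : Disjoint A B) {f : (∀ i, Ω i) → β} {g : (∀ i, Ω i) → γ}
    (hf : Measurable f) (hg : Measurable g) (hfA : DependsOn f A) (hgB : DependsOn g B) :
    IndepFun f g (Measure.pi μ) := by
  obtain ⟨x⟩ : Nonempty (∀ i, Ω i) := nonempty_of_isProbabilityMeasure (Measure.pi μ)
  have hrestrict : IndepFun A.restrict B.restrict (Measure.pi μ) :=
    (iIndepFun_pi (X := fun _ => id) fun _ => aemeasurable_id).indepFun_finset A B hAB
      measurable_pi_apply
  have hcomp := hrestrict.comp (φ := f ∘ Function.updateFinset x A)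
    (ψ := g ∘ Function.updateFinset x B) (hf.comp measurable_updateFinset)
    (hg.comp measurable_updateFinset)
  convert hcomp using 1
  · exact funext fun ω => (apply_updateFinset_restrict_of_dependsOn hfA x ω).symm
  · exact funext fun ω => (apply_updateFinset_restrict_of_dependsOn hgB x ω).symm

theorem mgf_sum_pi_of_dependsOn {κ : Type*} {K : Finset κ} {A : κ → Finset ι}
    (hA : (K : Set κ).PairwiseDisjoint A) {X : κ → (∀ i, Ω i) → ℝ}
    (hX : ∀ k ∈ K, Measurable (X k)) (hdep : ∀ k ∈ K, DependsOn (X k) (A k)) (t : ℝ) :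
    mgf (∑ k ∈ K, X k) (Measure.pi μ) t = ∏ k ∈ K, mgf (X k) (Measure.pi μ) t := by
  induction K using Finset.induction_on with
  | empty => simp [mgf_zero_fun]
  | insert k K hk ih =>
    simp only [Finset.forall_mem_insert] at hX hdep
    rw [Finset.coe_insert, Set.pairwiseDisjoint_insert_of_notMem (Finset.mem_coe.not.2 hk)] at hA
    have hsum : Measurable (∑ j ∈ K, X j) := by
      simpa only [Finset.sum_fn] using Finset.measurable_sum K hX.2
    have hsum_dep : DependsOn (∑ j ∈ K, X j) (K.biUnion A) := fun ω ω' h => by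
      simp only [Finset.sum_apply]
      exact Finset.sum_congr rfl fun j hj => hdep.2 j hj fun i hi =>
        h i (Finset.mem_biUnion.2 ⟨j, hj, hi⟩)
    have hindep : IndepFun (X k) (∑ j ∈ K, X j) (Measure.pi μ) :=
      indepFun_pi_of_dependsOn ((Finset.disjoint_biUnion_right _ _ _).2 hA.2) hX.1 hsum
        hdep.1 hsum_dep
    rw [Finset.sum_insert hk, Finset.prod_insert hk,
      hindep.mgf_add' hX.1.aestronglyMeasurable hsum.aestronglyMeasurable,
      ih hA.1 hX.2 hdep.2]

end ProductMeasure

section CappedSquare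

/-- The quadratic `lam * d ^ 2 / 2`, replaced by the linear function `d / 2` where `lam * d ≥ 1`.
Its exponential moment on a binomial variable stays near `1`, unlike that of the quadratic. -/
noncomputable def cappedSq (lam d : ℝ) : ℝ := d * min (lam * d) 1 / 2

theorem mul_choose_two_le_cappedSq {lam : ℝ} (hlam : 0 ≤ lam) {d : ℕ} (hd : lam * d ≤ 1) :
    lam * (d.choose 2 : ℕ) ≤ cappedSq lam d := by
  rw [cappedSq, min_eq_left hd, Nat.cast_choose_two]
  linarith [mul_nonneg hlam d.cast_nonneg]

theorem exp_cappedSq_le {lam m d : ℝ} (hlam : 0 ≤ lam) (hm : 0 < m)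
    (hlm : 50 * lam * m ^ 2 ≤ 1) (hd : 0 ≤ d) :
    Real.exp (cappedSq lam d) ≤
      1 + 2 * lam * m ^ 2 * Real.exp (d / m) + Real.exp (-(5 * m)) * Real.exp d := by
  rcases le_total d (10 * m) with hsmall | hlarge
  · have hquad : cappedSq lam d ≤ lam * d ^ 2 / 2 := by
      rw [cappedSq, pow_two, mul_left_comm]
      gcongr
      exact min_le_left _ _
    have hquad_le_one : lam * d ^ 2 / 2 ≤ 1 := by
      have : lam * d ^ 2 ≤ lam * (10 * m) ^ 2 := by gcongr
      linarith
    have hlinear : Real.exp (lam * d ^ 2 / 2) ≤ 1 + lam * d ^ 2 := by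
      have hy : 0 ≤ lam * d ^ 2 / 2 := by positivity
      have := Real.abs_exp_sub_one_le (abs_le.2 ⟨by linarith, hquad_le_one⟩)
      rw [abs_of_nonneg hy] at this
      linarith [le_of_abs_le this]
    have hsq : d ^ 2 ≤ 2 * m ^ 2 * Real.exp (d / m) := by
      have := Real.pow_div_factorial_le_exp (d / m) (by positivity) 2
      rw [Nat.factorial_two, Nat.cast_two, div_pow, div_div, div_le_iff₀ (by positivity)] at this
      linarith
    calc Real.exp (cappedSq lam d) ≤ 1 + lam * d ^ 2 := (Real.exp_le_exp.2 hquad).trans hlinear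
      _ ≤ 1 + lam * (2 * m ^ 2 * Real.exp (d / m)) := by gcongr
      _ = 1 + 2 * lam * m ^ 2 * Real.exp (d / m) := by ring
      _ ≤ _ := le_add_of_nonneg_right (by positivity)
  · have hlinear : cappedSq lam d ≤ -(5 * m) + d := by
      have : d * min (lam * d) 1 ≤ d * 1 := by gcongr; exact min_le_right _ _
      rw [cappedSq]
      linarith
    rw [← Real.exp_add]
    exact (Real.exp_le_exp.2 hlinear).trans (le_add_of_nonneg_left (by positivity))

end CappedSquare

section Degree

/-- The number of vertices of `T` joined to `w` in the graph with edge indicator `ω`; a loop at `w`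
counts if `w ∈ T`, since `gnp` also samples the diagonal of `Sym2`. -/
noncomputable def degreeIn {V : Type*} (w : V) (T : Finset V) (ω : Sym2 V → Bool) : ℕ :=
  (T.filter fun v => ω s(w, v) = true).card

variable {V : Type*} {S T W : Finset V} {w : V}

theorem degreeIn_mono (hST : S ⊆ T) (ω : Sym2 V → Bool) : degreeIn w S ω ≤ degreeIn w T ω :=
  Finset.card_le_card (Finset.filter_subset_filter _ hST)

theorem natCast_degreeIn (ω : Sym2 V → Bool) :
    (degreeIn w T ω : ℝ) = ∑ v ∈ T, if ω s(w, v) = true then 1 else 0 :=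
  Finset.natCast_card_filter _ _

theorem dependsOn_degreeIn : DependsOn (degreeIn w T) (T.image fun v => s(w, v)) := by
  intro ω ω' h
  refine congrArg Finset.card (Finset.filter_congr fun v hv => ?_)
  rw [h _ (Finset.mem_coe.2 (Finset.mem_image_of_mem _ hv))]

theorem pairwiseDisjoint_image_sym2Mk (hSW : Disjoint S W) :
    (W : Set V).PairwiseDisjoint fun w => S.image fun v => s(w, v) := by
  refine fun w _ w' hw' hne => Finset.disjoint_left.2 fun e he he' => ?_
  obtain ⟨v, hv, rfl⟩ := Finset.mem_image.1 he
  obtain ⟨v', -, heq⟩ := Finset.mem_image.1 he'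
  rcases Sym2.eq_iff.1 heq with ⟨rfl, -⟩ | ⟨rfl, -⟩
  · exact hne rfl
  · exact Finset.disjoint_left.1 hSW hv hw'

theorem badPairCount_le_sum_choose_degreeIn {r : ℕ} (S : Finset (Fin r))
    (ω : Sym2 (Fin r) → Bool) :
    badPairCount r S ω ≤ ∑ w ∈ Sᶜ, (degreeIn w S ω).choose 2 := by
  unfold badPairCount degreeIn
  simp_rw [← Sym2.card_image_offDiag]
  refine (Finset.card_le_card fun e he => ?_).trans Finset.card_biUnion_le
  induction e using Sym2.ind with
  | _ x y =>
    simp only [Finset.mem_filter_univ, Sym2.mk_isDiag_iff, Sym2.mem_iff, forall_eq_or_imp,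
      forall_eq] at he
    obtain ⟨hxy, ⟨hx, hy⟩, w, hw, hwx, hwy⟩ := he
    simp only [Finset.mem_biUnion, Finset.mem_image, Finset.mem_compl]
    exact ⟨w, hw, (x, y), by simp [hx, hy, hwx, hwy, hxy], rfl⟩

theorem mul_badPairCount_le_sum_cappedSq {r : ℕ} {lam : ℝ} (hlam : 0 ≤ lam) {S : Finset (Fin r)}
    {ω : Sym2 (Fin r) → Bool} (hdeg : ∀ w, lam * degreeIn w S ω ≤ 1) :
    lam * badPairCount r S ω ≤ ∑ w ∈ Sᶜ, cappedSq lam (degreeIn w S ω) :=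
  calc lam * badPairCount r S ω
      ≤ lam * (∑ w ∈ Sᶜ, (degreeIn w S ω).choose 2 : ℕ) := by
        gcongr
        exact badPairCount_le_sum_choose_degreeIn S ω
    _ = ∑ w ∈ Sᶜ, lam * ((degreeIn w S ω).choose 2 : ℕ) := by rw [Nat.cast_sum, Finset.mul_sum]
    _ ≤ ∑ w ∈ Sᶜ, cappedSq lam (degreeIn w S ω) :=
        Finset.sum_le_sum fun w _ => mul_choose_two_le_cappedSq hlam (hdeg w)

theorem setOf_exists_lt_badPairCount_subset {r k : ℕ} {lam x : ℝ} (hlam : 0 < lam) :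
    {ω | ∃ S : Finset (Fin r), S.card = k ∧ x < badPairCount r S ω} ⊆
      (⋃ w : Fin r, {ω | lam⁻¹ ≤ degreeIn w Finset.univ ω}) ∪
        ⋃ S ∈ Finset.univ.powersetCard k,
          {ω | lam * x ≤ ∑ w ∈ Sᶜ, cappedSq lam (degreeIn w S ω)} := by
  rintro ω ⟨S, hS, hx⟩
  by_cases hhigh : ∃ w, lam⁻¹ ≤ degreeIn w Finset.univ ω
  · exact Or.inl (Set.mem_iUnion.2 hhigh)
  have hdeg (w : Fin r) : lam * degreeIn w S ω ≤ 1 := by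
    have hlt : (degreeIn w Finset.univ ω : ℝ) < lam⁻¹ := not_le.1 fun h => hhigh ⟨w, h⟩
    have hmono : (degreeIn w S ω : ℝ) ≤ degreeIn w Finset.univ ω :=
      mod_cast degreeIn_mono (Finset.subset_univ S) ω
    rw [← le_inv_mul_iff₀ hlam, mul_one]
    exact hmono.trans hlt.le
  refine Or.inr (Set.mem_biUnion (Finset.mem_powersetCard_univ.2 hS) ?_)
  exact (mul_le_mul_of_nonneg_left hx.le hlam.le).trans
    (mul_badPairCount_le_sum_cappedSq hlam.le hdeg)

end Degree

section RandomGraph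

variable {r : ℕ} {p : ℝ}

theorem bern_eq_bernoulliMeasure (hp : p ∈ Set.Icc 0 1) :
    bern p = bernoulliMeasure true false ⟨p, hp⟩ := by
  rw [bern, bernoulliMeasure_def]
  congr 2
  · exact congrArg ENNReal.ofNNReal (Real.toNNReal_of_nonneg hp.1)
  · exact congrArg ENNReal.ofNNReal (Real.toNNReal_of_nonneg (sub_nonneg.2 hp.2))

theorem isProbabilityMeasure_bern (hp : p ∈ Set.Icc 0 1) : IsProbabilityMeasure (bern p) := by
  rw [bern_eq_bernoulliMeasure hp]
  infer_instance

instance isFiniteMeasure_gnp : IsFiniteMeasure (gnp r p) := by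
  unfold gnp
  infer_instance

theorem isProbabilityMeasure_gnp (hp : p ∈ Set.Icc 0 1) : IsProbabilityMeasure (gnp r p) := by
  have := isProbabilityMeasure_bern hp
  unfold gnp
  infer_instance

theorem mgf_edge_le (hp : p ∈ Set.Icc 0 1) (e : Sym2 (Fin r)) (t : ℝ) :
    mgf (fun ω => if ω e = true then 1 else 0) (gnp r p) t ≤
      Real.exp (p * (Real.exp t - 1)) := by
  have := isProbabilityMeasure_bern hp
  have heval : (gnp r p).map (fun ω => ω e) = bern p :=
    (measurePreserving_eval (fun _ => bern p) e).map_eq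
  have hbern : mgf (fun b : Bool => if b = true then 1 else 0) (bern p) t =
      p * (Real.exp t - 1) + 1 := by
    rw [mgf, bern_eq_bernoulliMeasure hp, integral_bernoulliMeasure]
    simp only [if_true, Bool.false_eq_true, if_false, smul_eq_mul, mul_one, mul_zero, Real.exp_zero]
    ring
  calc mgf (fun ω => if ω e = true then 1 else 0) (gnp r p) t
      = mgf (fun b : Bool => if b = true then 1 else 0) (bern p) t := by
        rw [← heval]
        exact (mgf_map (X := fun b : Bool => if b = true then 1 else 0)
          (Y := fun ω : Sym2 (Fin r) → Bool => ω e) (measurable_of_countable _).aemeasurable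
          (measurable_of_countable _).aestronglyMeasurable).symm
    _ ≤ _ := hbern.le.trans (Real.add_one_le_exp _)

theorem mgf_degreeIn_le (hp : p ∈ Set.Icc 0 1) (w : Fin r) (T : Finset (Fin r)) (t : ℝ) :
    mgf (fun ω => (degreeIn w T ω : ℝ)) (gnp r p) t ≤
      Real.exp (T.card * p * (Real.exp t - 1)) := by
  have := isProbabilityMeasure_bern hp
  have hsum : (fun ω => (degreeIn w T ω : ℝ)) =
      ∑ v ∈ T, fun ω : Sym2 (Fin r) → Bool => if ω s(w, v) = true then (1 : ℝ) else 0 := by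
    ext ω
    rw [natCast_degreeIn, Finset.sum_apply]
  have hedges : (T : Set (Fin r)).PairwiseDisjoint fun v => ({s(w, v)} : Finset (Sym2 (Fin r))) :=
    fun v _ v' _ hne => Finset.disjoint_singleton.2 fun h => hne (Sym2.congr_right.1 h)
  rw [hsum, gnp, mgf_sum_pi_of_dependsOn hedges (fun _ _ => measurable_of_countable _)
    (fun v _ ω ω' h => by rw [h _ (Finset.mem_coe.2 (Finset.mem_singleton_self _))])]
  calc _ ≤ ∏ _v ∈ T, Real.exp (p * (Real.exp t - 1)) :=
        Finset.prod_le_prod (fun _ _ => mgf_nonneg) fun v _ => mgf_edge_le hp s(w, v) t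
    _ = _ := by rw [Finset.prod_const, ← Real.exp_nat_mul, mul_assoc]

theorem mgf_sum_degreeIn (hp : p ∈ Set.Icc 0 1) {S W : Finset (Fin r)} (hSW : Disjoint S W)
    (h : ℕ → ℝ) (t : ℝ) :
    mgf (fun ω => ∑ w ∈ W, h (degreeIn w S ω)) (gnp r p) t =
      ∏ w ∈ W, mgf (fun ω => h (degreeIn w S ω)) (gnp r p) t := by
  have := isProbabilityMeasure_bern hp
  simpa only [Finset.sum_fn] using! mgf_sum_pi_of_dependsOn (μ := fun _ => bern p)
    (X := fun w ω => h (degreeIn w S ω)) (pairwiseDisjoint_image_sym2Mk hSW)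
    (fun _ _ => measurable_of_countable _)
    (fun w _ ω ω' hω => congrArg h (dependsOn_degreeIn hω)) t

theorem mgf_degreeIn_one_le (hp : p ∈ Set.Icc 0 1) (w : Fin r) (T : Finset (Fin r)) :
    mgf (fun ω => (degreeIn w T ω : ℝ)) (gnp r p) 1 ≤ Real.exp (2 * (T.card * p)) := by
  have hp0 := hp.1
  refine (mgf_degreeIn_le hp w T 1).trans (Real.exp_le_exp.2 ?_)
  rw [mul_comm]
  gcongr
  linarith [Real.exp_one_lt_three]

theorem mgf_degreeIn_inv_le (hp : p ∈ Set.Icc 0 1) (w : Fin r) {T : Finset (Fin r)} {m : ℝ}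
    (hTm : T.card * p = m) (hm : 1 ≤ m) :
    mgf (fun ω => (degreeIn w T ω : ℝ)) (gnp r p) m⁻¹ ≤ 8 := by
  have hm0 : 0 < m := by linarith
  have hexp : Real.exp m⁻¹ - 1 ≤ 2 * m⁻¹ := by
    have hinv : |m⁻¹| = m⁻¹ := abs_of_pos (inv_pos.2 hm0)
    have := Real.abs_exp_sub_one_le (hinv.trans_le (inv_le_one_of_one_le₀ hm))
    rw [hinv] at this
    exact le_of_abs_le this
  calc mgf (fun ω => (degreeIn w T ω : ℝ)) (gnp r p) m⁻¹
      ≤ Real.exp (m * (Real.exp m⁻¹ - 1)) := hTm ▸ mgf_degreeIn_le hp w T m⁻¹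
    _ ≤ Real.exp (m * (2 * m⁻¹)) := by gcongr
    _ = Real.exp 1 ^ 2 := by
      rw [← Real.exp_nat_mul]
      field_simp
      norm_num
    _ ≤ 2.7182818286 ^ 2 := by gcongr; exact Real.exp_one_lt_d9.le
    _ ≤ 8 := by norm_num

theorem gnp_le_degreeIn_le (hp : p ∈ Set.Icc 0 1) (w : Fin r) (T : Finset (Fin r)) (x : ℝ) :
    (gnp r p).real {ω | x ≤ degreeIn w T ω} ≤ Real.exp (2 * (T.card * p) - x) :=
  calc (gnp r p).real {ω | x ≤ degreeIn w T ω}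
      ≤ Real.exp (-1 * x) * mgf (fun ω => (degreeIn w T ω : ℝ)) (gnp r p) 1 :=
        measure_ge_le_exp_mul_mgf x zero_le_one Integrable.of_finite
    _ ≤ Real.exp (-1 * x) * Real.exp (2 * (T.card * p)) := by
        gcongr
        exact mgf_degreeIn_one_le hp w T
    _ = Real.exp (2 * (T.card * p) - x) := by
        rw [← Real.exp_add]
        ring_nf

theorem mgf_cappedSq_degreeIn_le (hp : p ∈ Set.Icc 0 1) (w : Fin r) {T : Finset (Fin r)}
    {lam m : ℝ} (hlam : 0 ≤ lam) (hTm : T.card * p = m) (hm : 1 ≤ m)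
    (hlm : 50 * lam * m ^ 2 ≤ 1) :
    mgf (fun ω => cappedSq lam (degreeIn w T ω)) (gnp r p) 1 ≤
      Real.exp (16 * lam * m ^ 2 + Real.exp (-(3 * m))) := by
  have := isProbabilityMeasure_gnp (r := r) hp
  have hm0 : 0 < m := by linarith
  have hmgf_inv := mgf_degreeIn_inv_le hp w hTm hm
  have hmgf_one := hTm ▸ mgf_degreeIn_one_le hp w T
  calc mgf (fun ω => cappedSq lam (degreeIn w T ω)) (gnp r p) 1
      ≤ ∫ ω, (1 + 2 * lam * m ^ 2 * Real.exp (m⁻¹ * degreeIn w T ω) +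
          Real.exp (-(5 * m)) * Real.exp (1 * degreeIn w T ω)) ∂gnp r p := by
        refine integral_mono Integrable.of_finite Integrable.of_finite fun ω => ?_
        simpa only [one_mul, div_eq_inv_mul] using
          exp_cappedSq_le hlam hm0 hlm (degreeIn w T ω).cast_nonneg
    _ = 1 + 2 * lam * m ^ 2 * mgf (fun ω => (degreeIn w T ω : ℝ)) (gnp r p) m⁻¹ +
          Real.exp (-(5 * m)) * mgf (fun ω => (degreeIn w T ω : ℝ)) (gnp r p) 1 := by
        rw [integral_add Integrable.of_finite Integrable.of_finite,
          integral_add Integrable.of_finite Integrable.of_finite, integral_const_mul,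
          integral_const_mul, integral_const, probReal_univ, one_smul, mgf, mgf]
    _ ≤ 1 + 2 * lam * m ^ 2 * 8 + Real.exp (-(5 * m)) * Real.exp (2 * m) := by gcongr
    _ = 16 * lam * m ^ 2 + Real.exp (-(3 * m)) + 1 := by
        rw [← Real.exp_add]
        ring_nf
    _ ≤ _ := Real.add_one_le_exp _

theorem gnp_le_sum_cappedSq_le (hp : p ∈ Set.Icc 0 1) {S : Finset (Fin r)} {lam m : ℝ}
    (hlam : 0 ≤ lam) (hSm : S.card * p = m) (hm : 1 ≤ m) (hlm : 50 * lam * m ^ 2 ≤ 1) (x : ℝ) :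
    (gnp r p).real {ω | x ≤ ∑ w ∈ Sᶜ, cappedSq lam (degreeIn w S ω)} ≤
      Real.exp (r * (16 * lam * m ^ 2 + Real.exp (-(3 * m))) - x) := by
  set c := 16 * lam * m ^ 2 + Real.exp (-(3 * m))
  have hcard : ((Sᶜ.card : ℕ) : ℝ) ≤ r := by
    exact_mod_cast (Finset.card_le_univ Sᶜ).trans_eq (Fintype.card_fin r)
  calc (gnp r p).real {ω | x ≤ ∑ w ∈ Sᶜ, cappedSq lam (degreeIn w S ω)}
      ≤ Real.exp (-1 * x) *
          mgf (fun ω => ∑ w ∈ Sᶜ, cappedSq lam (degreeIn w S ω)) (gnp r p) 1 :=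
        measure_ge_le_exp_mul_mgf x zero_le_one Integrable.of_finite
    _ = Real.exp (-1 * x) *
          ∏ w ∈ Sᶜ, mgf (fun ω => cappedSq lam (degreeIn w S ω)) (gnp r p) 1 := by
        rw [mgf_sum_degreeIn hp disjoint_compl_right fun d => cappedSq lam d]
    _ ≤ Real.exp (-1 * x) * ∏ _w ∈ Sᶜ, Real.exp c := by
        gcongr
        · exact fun _ _ => mgf_nonneg
        · exact mgf_cappedSq_degreeIn_le hp w hlam hSm hm hlm
    _ = Real.exp (Sᶜ.card * c - x) := by
        rw [Finset.prod_const, ← Real.exp_nat_mul, ← Real.exp_add]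
        ring_nf
    _ ≤ Real.exp (r * c - x) := by gcongr

theorem gnp_exists_lt_badPairCount_le (hp : p ∈ Set.Icc 0 1) {k : ℕ} {lam m : ℝ}
    (hlam : 0 < lam) (hkm : k * p = m) (hm : 1 ≤ m) (hlm : 50 * lam * m ^ 2 ≤ 1) (x : ℝ) :
    (gnp r p).real {ω | ∃ S : Finset (Fin r), S.card = k ∧ x < badPairCount r S ω} ≤
      r * Real.exp (2 * (r * p) - lam⁻¹) +
        r.choose k * Real.exp (r * (16 * lam * m ^ 2 + Real.exp (-(3 * m))) - lam * x) := by
  refine (measureReal_mono (setOf_exists_lt_badPairCount_subset hlam)).trans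
    ((measureReal_union_le _ _).trans (add_le_add ?_ ?_))
  · refine (measureReal_iUnion_fintype_le _).trans ((Finset.sum_le_card_nsmul _ _ _ fun w _ =>
      gnp_le_degreeIn_le hp w Finset.univ lam⁻¹).trans_eq ?_)
    rw [nsmul_eq_mul, Finset.card_univ, Fintype.card_fin]
  · refine (measureReal_biUnion_finset_le _ _).trans ((Finset.sum_le_card_nsmul _ _ _ fun S hS =>
      gnp_le_sum_cappedSq_le hp hlam.le (by rw [Finset.mem_powersetCard_univ.1 hS, hkm]) hm hlm
        (lam * x)).trans_eq ?_)
    rw [nsmul_eq_mul, Finset.card_powersetCard, Finset.card_univ, Fintype.card_fin]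

end RandomGraph

section Asymptotics

variable {n : ℕ}

theorem rr_le (n : ℕ) : (rr n : ℝ) ≤ (n : ℝ) ^ 2 / (10 ^ 6 * Real.log n ^ 2) :=
  Nat.floor_le (by positivity)

theorem rr_le_sq (hL : 1 ≤ Real.log n) : (rr n : ℝ) ≤ (n : ℝ) ^ 2 := by
  refine (rr_le n).trans (div_le_self (by positivity) ?_)
  linarith [one_le_pow₀ hL (n := 2)]

theorem natCast_pos_of_one_le_log (hL : 1 ≤ Real.log n) : (0 : ℝ) < n := by
  refine Nat.cast_pos.2 (Nat.pos_of_ne_zero ?_)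
  rintro rfl
  norm_num at hL

theorem choose_rr_le (hL : 1 ≤ Real.log n) :
    ((rr n).choose n : ℝ) ≤ Real.exp (2 * (n * Real.log n)) :=
  calc ((rr n).choose n : ℝ) ≤ (rr n : ℝ) ^ n := mod_cast Nat.choose_le_pow (rr n) n
    _ ≤ ((n : ℝ) ^ 2) ^ n := by gcongr; exact rr_le_sq hL
    _ = Real.exp (Real.log n) ^ (2 * n) := by
        rw [Real.exp_log (natCast_pos_of_one_le_log hL), pow_mul]
    _ = Real.exp (2 * (n * Real.log n)) := by rw [← Real.exp_nat_mul]; push_cast; ring_nf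

theorem rr_mul_exp_neg_le_inv (hL : 1 ≤ Real.log n) :
    rr n * Real.exp (-(3 * Real.log n)) ≤ (n : ℝ)⁻¹ := by
  have hexp := Real.exp_log (natCast_pos_of_one_le_log hL)
  set L := Real.log n
  calc rr n * Real.exp (-(3 * L)) ≤ (n : ℝ) ^ 2 * Real.exp (-(3 * L)) := by
        gcongr
        exact rr_le_sq hL
    _ = (n : ℝ)⁻¹ := by
        rw [← hexp, ← Real.exp_nat_mul, ← Real.exp_add, ← Real.exp_neg]
        push_cast
        ring_nf

theorem rr_mul_exp_le (hL : 1 ≤ Real.log n) (hn : 600000 * Real.log n ^ 3 ≤ n) :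
    rr n * Real.exp (2 * (rr n * pp n) - (30 * Real.log n / n)⁻¹) ≤ (n : ℝ)⁻¹ := by
  have hn0 : (0 : ℝ) < n := natCast_pos_of_one_le_log hL
  set L := Real.log n
  have hdeg : rr n * pp n ≤ 0.00002 * (n / L) := by
    calc rr n * pp n ≤ (n : ℝ) ^ 2 / (10 ^ 6 * L ^ 2) * (20 * L / n) := by
          rw [pp]
          gcongr
          exact rr_le n
      _ = 0.00002 * (n / L) := by field_simp; norm_num
  have hthreshold : (30 * L / n)⁻¹ = n / L / 30 := by field_simp
  have hgap : 600000 * L ≤ n / L := by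
    rw [le_div_iff₀ (by positivity)]
    linarith [pow_le_pow_right₀ hL (Nat.le_succ 2)]
  calc rr n * Real.exp (2 * (rr n * pp n) - (30 * L / n)⁻¹)
      ≤ rr n * Real.exp (-(3 * L)) := by
        gcongr
        linarith
    _ ≤ (n : ℝ)⁻¹ := rr_mul_exp_neg_le_inv hL

theorem choose_rr_mul_exp_le (hL : 1 ≤ Real.log n) (hn : 600000 * Real.log n ^ 3 ≤ n) :
    (rr n).choose n * Real.exp (rr n * (16 * (30 * Real.log n / n) * (20 * Real.log n) ^ 2 +
      Real.exp (-(3 * (20 * Real.log n)))) - 30 * Real.log n / n * ((n : ℝ) ^ 2 / 10)) ≤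
      (n : ℝ)⁻¹ := by
  have hL3 : 1 ≤ Real.log n ^ 3 := one_le_pow₀ hL
  have hn0 : (0 : ℝ) < n := natCast_pos_of_one_le_log hL
  set L := Real.log n
  have hsquares : rr n * (16 * (30 * L / n) * (20 * L) ^ 2) ≤ 0.192 * (n * L) := by
    calc rr n * (16 * (30 * L / n) * (20 * L) ^ 2)
        ≤ (n : ℝ) ^ 2 / (10 ^ 6 * L ^ 2) * (16 * (30 * L / n) * (20 * L) ^ 2) := by
          gcongr
          exact rr_le n
      _ = 0.192 * (n * L) := by field_simp; norm_num
  have htail : rr n * Real.exp (-(3 * (20 * L))) ≤ 1 :=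
    calc rr n * Real.exp (-(3 * (20 * L))) ≤ rr n * Real.exp (-(3 * L)) := by
          gcongr
          linarith
      _ ≤ (n : ℝ)⁻¹ := rr_mul_exp_neg_le_inv hL
      _ ≤ 1 := Nat.cast_inv_le_one n
  have hthreshold : 30 * L / n * ((n : ℝ) ^ 2 / 10) = 3 * (n * L) := by field_simp; norm_num
  have hnL : 600000 * L ≤ n * L := by gcongr; linarith
  have hexponent : rr n * (16 * (30 * L / n) * (20 * L) ^ 2 + Real.exp (-(3 * (20 * L)))) -
      30 * L / n * ((n : ℝ) ^ 2 / 10) ≤ -(2 * (n * L)) - L := by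
    rw [mul_add, hthreshold]
    linarith
  calc _ ≤ Real.exp (2 * (n * L)) * Real.exp (-(2 * (n * L)) - L) :=
        mul_le_mul (choose_rr_le hL) (Real.exp_le_exp.2 hexponent) (Real.exp_pos _).le
          (Real.exp_pos _).le
    _ = (n : ℝ)⁻¹ := by
        rw [← Real.exp_add, ← add_sub_assoc, add_neg_cancel, zero_sub, Real.exp_neg,
          Real.exp_log hn0]

theorem gnp_rr_exists_lt_badPairCount_le (hL : 1 ≤ Real.log n)
    (hn : 600000 * Real.log n ^ 3 ≤ n) :
    (gnp (rr n) (pp n)).real {ω | ∃ S : Finset (Fin (rr n)), S.card = n ∧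
      (n : ℝ) ^ 2 / 10 < badPairCount (rr n) S ω} ≤ 2 * (n : ℝ)⁻¹ := by
  have hn0 : (0 : ℝ) < n := natCast_pos_of_one_le_log hL
  have hp : pp n ∈ Set.Icc 0 1 := by
    refine ⟨by rw [pp]; positivity, ?_⟩
    rw [pp, div_le_one hn0]
    nlinarith [le_self_pow₀ hL (three_ne_zero)]
  have hmean : n * pp n = 20 * Real.log n := mul_div_cancel₀ _ hn0.ne'
  have hcap : 50 * (30 * Real.log n / n) * (20 * Real.log n) ^ 2 ≤ 1 := by
    rw [mul_div_assoc', div_mul_eq_mul_div, div_le_one hn0]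
    linarith
  have hbound := gnp_exists_lt_badPairCount_le (r := rr n) hp (lam := 30 * Real.log n / n)
    (by positivity) hmean (by linarith) hcap ((n : ℝ) ^ 2 / 10)
  linarith [rr_mul_exp_le hL hn, choose_rr_mul_exp_le hL hn]

theorem eventually_mul_log_pow_le (c : ℝ) (k : ℕ) :
    ∀ᶠ n : ℕ in Filter.atTop, c * Real.log n ^ k ≤ n := by
  have hlittle : (fun x => c * Real.log x ^ k) =o[Filter.atTop] id :=
    Real.isLittleO_pow_log_id_atTop.const_mul_left c
  filter_upwards [tendsto_natCast_atTop_atTop.eventually (hlittle.bound one_pos)] with n hn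
  simpa using (le_abs_self _).trans hn

end Asymptotics

theorem stmt13 :
    Filter.Tendsto
      (fun n : ℕ => gnp (rr n) (pp n)
        {ω : Sym2 (Fin (rr n)) → Bool | ∃ S : Finset (Fin (rr n)), S.card = n ∧
          (n : ℝ) ^ 2 / 10 < (badPairCount (rr n) S ω : ℝ)})
      Filter.atTop (nhds (0 : ENNReal)) := by
  have hlog : ∀ᶠ n : ℕ in Filter.atTop, 1 ≤ Real.log n :=
    (Real.tendsto_log_atTop.comp tendsto_natCast_atTop_atTop).eventually_ge_atTop 1
  have hlim : Filter.Tendsto (fun n : ℕ => ENNReal.ofReal (2 * (n : ℝ)⁻¹)) Filter.atTop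
      (nhds 0) := by
    simpa using ENNReal.tendsto_ofReal (tendsto_inv_atTop_nhds_zero_nat.const_mul (2 : ℝ))
  refine tendsto_of_tendsto_of_tendsto_of_le_of_le' tendsto_const_nhds hlim
    (Filter.Eventually.of_forall fun _ => zero_le) ?_
  filter_upwards [hlog, eventually_mul_log_pow_le 600000 3] with n hL hn
  rw [← ofReal_measureReal]
  exact ENNReal.ofReal_le_ofReal (gnp_rr_exists_lt_badPairCount_le hL hn)

end OnlineRamseyGame
end
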